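/- Let C = A ∪ B be an ℓ-critical set with no ℓ-divided 5-hole in C and with |A| ≥ 6, with ℓ vertical, A to the left of ℓ, and all points of C having distinct x-coordinates. Then w_i ≤ 3 for every i with 1 < i < t. Moreover, if exactly two points of A lie on the boundary of the convex hull of C, then also w_1 ≤ 3 and w_t ≤ 3. -/

import Mathlib

noncomputable section

/-- Points of the plane. -/
abbrev Pt : Type := ℝ × ℝ

/-- The cross product (signed area) of two planar vectors. -/
def cross2 (u v : Pt) : ℝ := u.1 * v.2 - u.2 * v.1

/-- The dot product of two planar vectors. -/
def dotp (v p : Pt) : ℝ := v.1 * p.1 + v.2 * p.2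

/-- A set of points in the plane is in general position if no three of its points
are collinear. -/
def GenPos (P : Set Pt) : Prop :=
  ∀ p ∈ P, ∀ q ∈ P, ∀ r ∈ P, p ≠ q → p ≠ r → q ≠ r →
    ¬ Collinear ℝ ({p, q, r} : Set Pt)

/-- A set of points is in convex position if no point of the set lies in the convex
hull of the other points. -/
def ConvexPos (S : Set Pt) : Prop :=
  ∀ p ∈ S, p ∉ convexHull ℝ (S \ {p})

/-- `H` is a `k`-hole in `P`: a subset of `P` of size `k` in convex position whose
convex hull contains no point of `P \ H`. -/
def IsKHole (k : ℕ) (P H : Finset Pt) : Prop :=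
  H ⊆ P ∧ H.card = k ∧ ConvexPos (↑H : Set Pt) ∧
    ∀ p ∈ P, p ∉ H → p ∉ convexHull ℝ (↑H : Set Pt)

/-- The number of `k`-holes in `P`. -/
def numKHoles (k : ℕ) (P : Finset Pt) : ℕ :=
  Set.ncard {H : Finset Pt | IsKHole k P H}

/-- For an `ℓ`-divided set `P = A ∪ B`, an `ℓ`-divided 5-hole is a 5-hole in `A ∪ B`
containing points of both `A` and `B`. -/
def DividedFiveHole (A B H : Finset Pt) : Prop :=
  IsKHole 5 (A ∪ B) H ∧ (↑H ∩ ↑A : Set Pt).Nonempty ∧ (↑H ∩ ↑B : Set Pt).Nonempty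

/-- `x` is an extremal point of `P`: it lies on the boundary of the convex hull of `P`. -/
def OnHullBoundary (P : Finset Pt) (x : Pt) : Prop :=
  x ∈ frontier (convexHull ℝ (↑P : Set Pt))

/-- An `ℓ`-divided set `C = A ∪ B` is `ℓ`-critical if neither part is in convex position
and, for every extremal point `x` of `C`, one of the sets `(C \ {x}) ∩ A` and
`(C \ {x}) ∩ B` is in convex position. -/
def LCritical (A B : Finset Pt) : Prop :=
  ¬ ConvexPos (↑A : Set Pt) ∧ ¬ ConvexPos (↑B : Set Pt) ∧
    ∀ x ∈ A ∪ B, OnHullBoundary (A ∪ B) x →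
      (ConvexPos (↑(A.erase x) : Set Pt) ∨ ConvexPos (↑(B.erase x) : Set Pt))

/-- The closed wedge with apex `a` swept clockwise from the ray `a→p` to the ray `a→q`.
If the clockwise angle from `a→p` to `a→q` is at most `π` the wedge is convex, otherwise
it is the corresponding reflex region. -/
def Wedge (a p q : Pt) : Set Pt :=
  if cross2 (p - a) (q - a) ≤ 0 then
    {x | cross2 (p - a) (x - a) ≤ 0 ∧ 0 ≤ cross2 (q - a) (x - a)}
  else
    {x | cross2 (p - a) (x - a) ≤ 0 ∨ 0 ≤ cross2 (q - a) (x - a)}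

/-- `W` is an `a`-wedge of `A`: one of the closed regions into which the rays from `a`
through the other points of `A` partition the plane, i.e. a wedge spanned by two
points of `A \ {a}` that are angularly consecutive around `a` (no other point of `A`
lies in the wedge). -/
def IsAWedge (A : Finset Pt) (a : Pt) (W : Set Pt) : Prop :=
  ∃ p ∈ A.erase a, ∃ q ∈ A.erase a, p ≠ q ∧ W = Wedge a p q ∧
    (↑A : Set Pt) ∩ Wedge a p q ⊆ {a, p, q}

/-- The combinatorial data of the `a*`-wedges of an `ℓ`-divided set `P = A ∪ B`, where
`ℓ` is the vertical line `x = x0` and `A` lies to its left: `aStar` is the rightmost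
interior point `a*` of `A`; `lbl` is the clockwise cyclic labeling `a_0, a_1, …` of
`A \ {a*}` (period `|A| - 1`), so that the `k`-th wedge `W_k` is swept clockwise from
the ray through `lbl (k-1)` to the ray through `lbl k` and contains no other point
of `A`; the wedges `W_1, …, W_t` are exactly those meeting `ℓ`, in top-to-bottom
order along `ℓ`. -/
structure StarSetup (x0 : ℝ) (A : Finset Pt) where
  aStar : Pt
  lbl : ℕ → Pt
  t : ℕ
  aStar_mem : aStar ∈ A
  aStar_interior : aStar ∈ interior (convexHull ℝ (↑A : Set Pt))
  aStar_rightmost : ∀ p ∈ A, p ∈ interior (convexHull ℝ (↑A : Set Pt)) → p.1 ≤ aStar.1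
  lbl_mem : ∀ k, lbl k ∈ A.erase aStar
  lbl_periodic : ∀ k, lbl (k + (A.card - 1)) = lbl k
  lbl_bij : ∀ p ∈ A.erase aStar, ∃! k, k ∈ Finset.Icc 1 (A.card - 1) ∧ lbl k = p
  consec : ∀ k ∈ Finset.Icc 1 (A.card - 1),
    (↑A : Set Pt) ∩ Wedge aStar (lbl (k - 1)) (lbl k) ⊆ {aStar, lbl (k - 1), lbl k}
  t_pos : 1 ≤ t
  t_le : t ≤ A.card - 1
  inter_iff : ∀ k ∈ Finset.Icc 1 (A.card - 1),
    ((Wedge aStar (lbl (k - 1)) (lbl k)) ∩ {p : Pt | p.1 = x0}).Nonempty ↔ k ≤ t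
  ordered : ∀ k ∈ Finset.Icc 1 t, ∀ k' ∈ Finset.Icc 1 t, k < k' →
    ∀ p ∈ (Wedge aStar (lbl (k - 1)) (lbl k)) ∩ {q : Pt | q.1 = x0},
    ∀ p' ∈ (Wedge aStar (lbl (k' - 1)) (lbl k')) ∩ {q : Pt | q.1 = x0},
      p'.2 ≤ p.2

/-- The `k`-th `a*`-wedge `W_k`. -/
def StarSetup.W {x0 : ℝ} {A : Finset Pt} (S : StarSetup x0 A) (k : ℕ) : Set Pt :=
  Wedge S.aStar (S.lbl (k - 1)) (S.lbl k)

/-- `w_k`, the number of points of `B` in the `k`-th `a*`-wedge. -/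
def StarSetup.w {x0 : ℝ} {A : Finset Pt} (S : StarSetup x0 A) (B : Finset Pt) (k : ℕ) : ℕ :=
  Set.ncard ((↑B : Set Pt) ∩ S.W k)

/-!
Let `x ∈ A` be extremal in `C` and not one of the three points spanning the wedge `W_k`. Deleting
`x` creates no divided 5-hole, and criticality puts `A \ {x}` in convex position. So it suffices to
bound the number of points of `B` in a sector bounded by the rays from a point `a` of a convex set
of at least five points, left of `ℓ`, through two others, where the sector contains no further point
of that set.

The tool is the following observation. If a convex quadrilateral `pqrs` is a 4-hole with points on
both sides of `ℓ`, then no point of `C` lies in the region beyond the side `rs` bounded by `rs` and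
the lines `qr` and `sp`: such a point closest to `rs` would yield a divided 5-hole. Applied to
quadrilaterals spanned by the leftmost points of the sector and points on its boundary, it shows
that a sector having points of the convex set on both of its sides contains at most two points of
`B`. If all remaining points of the convex set lie on the same side, the first two of them bound two
further empty sectors, and a fourth point of `B` in the given sector is again impossible.

For `1 < k < t` the leftmost point of `A` serves as `x`, since the rays bounding `W_k` both point
towards `ℓ`. If exactly two points of `A` are extremal in `C`, then either one of them serves, or
`W_k` is bounded by the rays through both of them. In the latter case `W_k` contains no point of
`B`: its part inside the convex hull of `C` is the triangle spanned by `a*` and the two points,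
which lies to the left of `ℓ`.
-/

/-! ### Orientation of point triples -/

/-- The orientation determinant of a triple of points: positive for a counterclockwise triple,
zero for a collinear one. -/
def ori (a b c : Pt) : ℝ := cross2 (b - a) (c - a)

theorem ori_def (a b c : Pt) :
    ori a b c = (b.1 - a.1) * (c.2 - a.2) - (b.2 - a.2) * (c.1 - a.1) := rfl

@[grind]
theorem ori_rotate (a b c : Pt) : ori b c a = ori a b c := by
  simp only [ori_def]; ring

theorem ori_pos_rotate {a b c : Pt} (h : 0 < ori a b c) : 0 < ori b c a := by rwa [ori_rotate]

theorem ori_swap (a b c : Pt) : ori a c b = -ori a b c := by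
  simp only [ori_def]; ring

@[grind]
theorem ori_swap_left (a b c : Pt) : ori b a c = -ori a b c := by
  simp only [ori_def]; ring

@[simp] theorem ori_self_left (a b : Pt) : ori a a b = 0 := by simp [ori_def]

@[simp] theorem ori_self_right (a b : Pt) : ori a b b = 0 := by simp [ori_def, mul_comm]

@[simp] theorem ori_self_outer (a b : Pt) : ori a b a = 0 := by simp [ori_def]

theorem ori_split (a b c d : Pt) : ori a b c = ori a b d + ori b c d + ori c a d := by
  simp only [ori_def]; ring

-- The three-term Grassmann–Plücker relation.
theorem ori_mul_ori (t a b c d : Pt) :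
    ori t a c * ori t b d = ori t a b * ori t c d + ori t a d * ori t b c := by
  simp only [ori_def]; ring

@[grind]
theorem ne_of_ori_pos {a b c : Pt} (h : 0 < ori a b c) : a ≠ b ∧ a ≠ c ∧ b ≠ c := by
  refine ⟨?_, ?_, ?_⟩ <;> rintro rfl <;> simp at h

theorem ori_affine (p q : Pt) {x y : Pt} {s t : ℝ} (hst : s + t = 1) :
    ori p q (s • x + t • y) = s * ori p q x + t * ori p q y := by
  obtain rfl : t = 1 - s := by linarith
  simp only [ori_def, Prod.fst_add, Prod.snd_add, Prod.smul_fst, Prod.smul_snd, smul_eq_mul]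
  ring

theorem convex_ori_nonneg (p q : Pt) : Convex ℝ {z | 0 ≤ ori p q z} := by
  intro x hx y hy s t hs ht hst
  simp only [Set.mem_ofPred_eq] at hx hy ⊢
  rw [ori_affine p q hst]
  positivity

theorem convex_ori_pos (p q : Pt) : Convex ℝ {z | 0 < ori p q z} := by
  refine convex_iff_forall_pos.2 fun x hx y hy s t hs ht hst => ?_
  simp only [Set.mem_ofPred_eq] at hx hy ⊢
  rw [ori_affine p q hst]
  positivity

theorem convex_fst_lt (c : ℝ) : Convex ℝ {z : Pt | z.1 < c} :=
  convex_halfSpace_lt (LinearMap.fst ℝ ℝ ℝ).isLinear c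

theorem convex_lt_fst (c : ℝ) : Convex ℝ {z : Pt | c < z.1} :=
  convex_halfSpace_gt (LinearMap.fst ℝ ℝ ℝ).isLinear c

theorem convex_fst_le (c : ℝ) : Convex ℝ {z : Pt | z.1 ≤ c} :=
  convex_halfSpace_le (LinearMap.fst ℝ ℝ ℝ).isLinear c

theorem mem_of_ori_nonneg {K : Set Pt} (hK : Convex ℝ K) {u v w z : Pt} (hu : u ∈ K) (hv : v ∈ K)
    (hw : w ∈ K) (huvw : 0 < ori u v w) (huv : 0 ≤ ori u v z) (hvw : 0 ≤ ori v w z)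
    (hwu : 0 ≤ ori w u z) : z ∈ K := by
  have hz : z = (ori v w z / ori u v w) • u + (ori w u z / ori u v w) • v +
      (ori u v z / ori u v w) • w := by
    ext <;> simp only [Prod.fst_add, Prod.snd_add, Prod.smul_fst, Prod.smul_snd, smul_eq_mul] <;>
      field_simp <;> simp only [ori_def] <;> ring
  have hsum : ori v w z / ori u v w + ori w u z / ori u v w + ori u v z / ori u v w = 1 := by
    field_simp
    linarith [ori_split u v w z]
  rw [hz]
  simpa [Fin.sum_univ_three] using hK.sum_mem (t := Finset.univ)
    (w := ![ori v w z / ori u v w, ori w u z / ori u v w, ori u v z / ori u v w]) (z := ![u, v, w])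
    (by simp [Fin.forall_fin_succ, div_nonneg, huvw.le, huv, hvw, hwu])
    (by simpa [Fin.sum_univ_three] using hsum) (by simp [Fin.forall_fin_succ, hu, hv, hw])

theorem mem_of_mem_convexHull_quad {K : Set Pt} (hK : Convex ℝ K) {p q r s z : Pt}
    (hz : z ∈ convexHull ℝ {p, q, r, s}) (hp : p ∈ K) (hq : q ∈ K) (hr : r ∈ K) (hs : s ∈ K) :
    z ∈ K :=
  convexHull_min (by simp [Set.insert_subset_iff, hp, hq, hr, hs]) hK hz

theorem mem_convexHull_quad {p q r s z : Pt} (hpqr : 0 < ori p q r) (hrsp : 0 < ori r s p)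
    (hpq : 0 ≤ ori p q z) (hqr : 0 ≤ ori q r z) (hrs : 0 ≤ ori r s z) (hsp : 0 ≤ ori s p z) :
    z ∈ convexHull ℝ {p, q, r, s} := by
  have hmem : ({p, q, r, s} : Set Pt) ⊆ convexHull ℝ {p, q, r, s} := subset_convexHull ℝ _
  simp only [Set.insert_subset_iff, Set.singleton_subset_iff] at hmem
  obtain ⟨hp, hq, hr, hs⟩ := hmem
  rcases le_total 0 (ori r p z) with h | h
  · exact mem_of_ori_nonneg (convex_convexHull ℝ _) hp hq hr hpqr hpq hqr h
  · exact mem_of_ori_nonneg (convex_convexHull ℝ _) hr hs hp hrsp hrs hsp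
      (by rw [ori_swap_left]; linarith)

theorem collinear_of_ori_eq_zero {p q r : Pt} (h : ori p q r = 0) :
    Collinear ℝ ({p, q, r} : Set Pt) := by
  obtain rfl | hpq := eq_or_ne p q
  · simpa using collinear_pair ℝ p r
  have hne : (q.1 - p.1) ^ 2 + (q.2 - p.2) ^ 2 ≠ 0 := fun h0 => hpq <| Prod.ext
    (by nlinarith [sq_nonneg (q.1 - p.1), sq_nonneg (q.2 - p.2)])
    (by nlinarith [sq_nonneg (q.1 - p.1), sq_nonneg (q.2 - p.2)])
  rw [ori_def] at h
  refine (collinear_iff_of_mem (p₀ := p) (by simp)).2 ⟨q - p, ?_⟩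
  simp only [Set.mem_insert_iff, Set.mem_singleton_iff, forall_eq_or_imp, forall_eq]
  refine ⟨⟨0, by simp⟩, ⟨1, by simp⟩, ((r.1 - p.1) * (q.1 - p.1) + (r.2 - p.2) * (q.2 - p.2)) /
    ((q.1 - p.1) ^ 2 + (q.2 - p.2) ^ 2), ?_⟩
  ext <;> simp only [vadd_eq_add, Prod.fst_add, Prod.snd_add, Prod.smul_fst, Prod.smul_snd,
    Prod.fst_sub, Prod.snd_sub, smul_eq_mul] <;> field_simp
  · linear_combination -(q.2 - p.2) * h
  · linear_combination (q.1 - p.1) * h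

theorem GenPos.ori_ne_zero {P : Set Pt} (h : GenPos P) {p q r : Pt} (hp : p ∈ P) (hq : q ∈ P)
    (hr : r ∈ P) (hpq : p ≠ q) (hpr : p ≠ r) (hqr : q ≠ r) : ori p q r ≠ 0 :=
  fun h0 => h p hp q hq r hr hpq hpr hqr (collinear_of_ori_eq_zero h0)

/-! ### Sign rules for four rays from a point -/

theorem ori_pos_trans_first {t a b c d : Pt} (hab : 0 < ori t a b) (hac : 0 < ori t a c)
    (had : 0 < ori t a d) (hbc : 0 < ori t b c) (hcd : 0 < ori t c d) : 0 < ori t b d := by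
  have := ori_mul_ori t a b c d
  exact pos_of_mul_pos_right (by rw [this]; positivity) hac.le

theorem ori_pos_trans_last {t a b c d : Pt} (hab : 0 < ori t a b) (hbc : 0 < ori t b c)
    (had : 0 < ori t a d) (hbd : 0 < ori t b d) (hcd : 0 < ori t c d) : 0 < ori t a c := by
  have := ori_mul_ori t a b c d
  exact pos_of_mul_pos_left (by rw [this]; positivity) hbd.le

theorem ori_pos_of_turn {t a b c d : Pt} (hab : 0 < ori t a b) (hac : 0 < ori t a c)
    (hbc : 0 < ori t b c) (hbd : 0 < ori t b d) (hda : 0 < ori t d a) : 0 < ori t c d := by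
  have : ori t a b * ori t c d = ori t a c * ori t b d + ori t d a * ori t b c := by
    linear_combination -ori_mul_ori t a b c d - ori t b c * ori_swap t a d
  exact pos_of_mul_pos_right (by rw [this]; positivity) hab.le

theorem ori_pos_of_spanning {t a b c d : Pt} (hab : 0 < ori t a b) (hbc : 0 < ori t b c)
    (hca : 0 < ori t c a) (hda : 0 < ori t d a) (hdb : 0 < ori t d b) : 0 < ori t c d := by
  have : ori t a b * ori t c d = ori t c a * ori t d b + ori t d a * ori t b c := by
    simp only [ori_def]; ring
  exact pos_of_mul_pos_right (by rw [this]; positivity) hab.le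

/-! ### Divided holes -/

theorem notMem_convexHull_of_ori_pos {K : Set Pt} {u v z : Pt} (hK : ∀ k ∈ K, 0 ≤ ori u v k)
    (hz : 0 < ori v u z) : z ∉ convexHull ℝ K := fun hzK => by
  have : 0 ≤ ori u v z := convexHull_min hK (convex_ori_nonneg u v) hzK
  linarith [ori_swap_left u v z]

theorem convexPos_pentagon {p q r s t : Pt} (hpqr : 0 < ori p q r) (hpqs : 0 < ori p q s)
    (hpqt : 0 < ori p q t) (hprs : 0 < ori p r s) (hprt : 0 < ori p r t) (hpst : 0 < ori p s t)
    (hqrs : 0 < ori q r s) (hqrt : 0 < ori q r t) (hqst : 0 < ori q s t) (hrst : 0 < ori r s t) :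
    ConvexPos ({p, q, r, s, t} : Set Pt) := by
  -- Each vertex is cut off from the others by the line through its two neighbours.
  have cut {K : Set Pt} {a b c d e : Pt} (hK : K ⊆ {b, c, d, e}) (heab : 0 < ori e a b)
      (hebc : 0 < ori e b c) (hebd : 0 < ori e b d) : a ∉ convexHull ℝ K := by
    refine notMem_convexHull_of_ori_pos (u := e) (v := b) (fun k hk => ?_)
      (ori_pos_rotate (ori_pos_rotate heab))
    obtain rfl | rfl | rfl | rfl := hK hk
    exacts [by simp, hebc.le, hebd.le, by simp]
  rintro v (rfl | rfl | rfl | rfl | rfl)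
  · exact cut (b := q) (c := r) (d := s) (e := t) (by intro z; simp; tauto)
      (ori_pos_rotate (ori_pos_rotate hpqt)) (ori_pos_rotate (ori_pos_rotate hqrt))
      (ori_pos_rotate (ori_pos_rotate hqst))
  · exact cut (b := r) (c := s) (d := t) (e := p) (by intro z; simp; tauto) hpqr hprs hprt
  · exact cut (b := s) (c := t) (d := p) (e := q) (by intro z; simp; tauto) hqrs hqst
      (ori_pos_rotate hpqs)
  · exact cut (b := t) (c := p) (d := q) (e := r) (by intro z; simp; tauto) hrst
      (ori_pos_rotate hprt) (ori_pos_rotate hqrt)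
  · exact cut (b := p) (c := q) (d := r) (e := s) (by intro z; simp; tauto)
      (ori_pos_rotate hpst) (ori_pos_rotate (ori_pos_rotate hpqs))
      (ori_pos_rotate (ori_pos_rotate hprs))

/-- A point set without a 5-hole having vertices on both sides of the vertical line at `x₀`,
together with the genericity under which such sets are studied. Unlike `DividedFiveHole` it refers
to the line rather than to a bipartition, which makes it inherited by other point sets. -/
structure DividedHoleFree (x₀ : ℝ) (C : Finset Pt) : Prop where
  genPos : GenPos (C : Set Pt)
  injOn_fst : Set.InjOn Prod.fst (C : Set Pt)
  not_divided : ∀ H, IsKHole 5 C H → (∃ p ∈ H, p.1 < x₀) → ¬ ∃ p ∈ H, x₀ < p.1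

/-- A 4-hole in `C`, listed counterclockwise, with vertices on both sides of the vertical line at
`x₀`. -/
structure DividedFourHole (x₀ : ℝ) (C : Finset Pt) (p q r s : Pt) : Prop where
  subset : ({p, q, r, s} : Set Pt) ⊆ C
  ori_pqr : 0 < ori p q r
  ori_qrs : 0 < ori q r s
  ori_rsp : 0 < ori r s p
  ori_spq : 0 < ori s p q
  empty : ∀ z ∈ C, z ∈ convexHull ℝ {p, q, r, s} → z ∈ ({p, q, r, s} : Set Pt)
  exists_left : ∃ z ∈ ({p, q, r, s} : Set Pt), z.1 < x₀
  exists_right : ∃ z ∈ ({p, q, r, s} : Set Pt), x₀ < z.1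

section

variable {x₀ : ℝ} {C : Finset Pt} {p q r s y : Pt}

@[grind]
theorem DividedHoleFree.ori_ne_zero (hC : DividedHoleFree x₀ C) (hp : p ∈ C) (hq : q ∈ C)
    (hr : r ∈ C) (hpq : p ≠ q) (hpr : p ≠ r) (hqr : q ≠ r) : ori p q r ≠ 0 :=
  hC.genPos.ori_ne_zero hp hq hr hpq hpr hqr

theorem DividedFourHole.rotate (h : DividedFourHole x₀ C p q r s) :
    DividedFourHole x₀ C q r s p := by
  have hset : ({q, r, s, p} : Set Pt) = {p, q, r, s} := by ext; simp; tauto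
  exact ⟨hset ▸ h.subset, h.ori_qrs, h.ori_rsp, h.ori_spq, h.ori_pqr, hset ▸ h.empty,
    hset ▸ h.exists_left, hset ▸ h.exists_right⟩

theorem DividedFourHole.not_isKHole_five (h : DividedFourHole x₀ C p q r s)
    (hC : DividedHoleFree x₀ C) : ¬ IsKHole 5 C {p, q, r, y, s} := by
  intro hH
  obtain ⟨u, hu, hul⟩ := h.exists_left
  obtain ⟨v, hv, hvr⟩ := h.exists_right
  have hsub : ({p, q, r, s} : Set Pt) ⊆ ({p, q, r, y, s} : Finset Pt) := by
    intro z; simp; tauto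
  exact hC.not_divided _ hH ⟨u, hsub hu, hul⟩ ⟨v, hsub hv, hvr⟩

theorem DividedFourHole.mem_of_ori (h : DividedFourHole x₀ C p q r s) (hy : y ∈ C)
    (hpq : 0 ≤ ori p q y) (hqr : 0 ≤ ori q r y) (hrs : 0 ≤ ori r s y) (hsp : 0 ≤ ori s p y) :
    y ∈ ({p, q, r, s} : Set Pt) :=
  h.empty y hy (mem_convexHull_quad h.ori_pqr h.ori_rsp hpq hqr hrs hsp)

theorem DividedFourHole.isKHole_five (h : DividedFourHole x₀ C p q r s) (hC : DividedHoleFree x₀ C)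
    (hy : y ∈ C) (hqr : 0 < ori q r y) (hsr : 0 < ori s r y) (hsp : 0 < ori s p y)
    (hmin : ∀ z ∈ C, 0 < ori q r z → 0 < ori s r z → 0 < ori s p z → ori s r y ≤ ori s r z) :
    IsKHole 5 C {p, q, r, y, s} := by
  obtain ⟨hsub, hpqr, hqrs, hrsp, hspq, -, -, -⟩ := id h
  have hpry : 0 < ori p r y := by
    rw [← ori_rotate]; apply ori_pos_trans_last (a := y) (b := s) (d := q) <;> grind
  have hqys : 0 < ori q y s := by
    rw [← ori_rotate, ← ori_rotate]; apply ori_pos_trans_first (a := p) (c := r) <;> grind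
  have hpqy : 0 < ori p q y := by
    rw [← ori_rotate]; apply ori_pos_trans_first (a := r) (c := s) <;> grind
  obtain ⟨hpC, hqC, hrC, hsC⟩ : p ∈ C ∧ q ∈ C ∧ r ∈ C ∧ s ∈ C := by
    simpa [Set.insert_subset_iff] using hsub
  have hhull : ∀ {u v : Pt}, 0 ≤ ori u v p → 0 ≤ ori u v q → 0 ≤ ori u v r → 0 ≤ ori u v y →
      0 ≤ ori u v s → ∀ z ∈ convexHull ℝ (({p, q, r, y, s} : Finset Pt) : Set Pt), 0 ≤ ori u v z :=
    fun hp hq hr hy hs z hz =>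
      convexHull_min (by simp [Set.insert_subset_iff, *]) (convex_ori_nonneg _ _) hz
  refine ⟨by simp [Finset.insert_subset_iff, *], by grind, ?_, fun z hz hzH hzhull => ?_⟩
  · simpa using convexPos_pentagon hpqr hpqy (by grind) hpry (by grind) (by grind) hqr hqrs hqys
      (by grind)
  have hpqz : 0 ≤ ori p q z := hhull (by simp) (by simp) (by grind) (by grind) (by grind) z hzhull
  have hqrz : 0 ≤ ori q r z := hhull (by grind) (by simp) (by simp) (by grind) (by grind) z hzhull
  have hryz : 0 ≤ ori r y z := hhull (by grind) (by grind) (by simp) (by simp) (by grind) z hzhull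
  have hysz : 0 ≤ ori y s z := hhull (by grind) (by grind) (by grind) (by simp) (by simp) z hzhull
  have hspz : 0 ≤ ori s p z := hhull (by simp) (by grind) (by grind) (by grind) (by simp) z hzhull
  simp only [Finset.mem_insert, Finset.mem_singleton, not_or] at hzH
  obtain hrsz | hsrz : 0 < ori r s z ∨ 0 < ori s r z := by grind
  · have := h.mem_of_ori hz hpqz hqrz hrsz.le hspz
    grind
  have hryz_pos : 0 < ori r y z := by grind
  have : ori s r y ≤ ori s r z := hmin z hz (by grind) hsrz (by grind)
  linarith [ori_split s r y z, ori_swap_left y s z, ori_rotate s y z]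

theorem DividedFourHole.ori_pos (h : DividedFourHole x₀ C p q r s) (hC : DividedHoleFree x₀ C)
    (hy : y ∈ C) (hqr : 0 < ori q r y) (hsp : 0 < ori s p y) : 0 < ori r s y := by
  have hrC : r ∈ C := h.subset (by simp)
  have hsC : s ∈ C := h.subset (by simp)
  by_contra hrsy
  -- A point beyond `rs` as close as possible to this line completes the 4-hole to a 5-hole.
  let beyond := C.filter fun z => 0 < ori q r z ∧ 0 < ori s r z ∧ 0 < ori s p z
  obtain ⟨b, hb, hmin⟩ := beyond.exists_min_image (ori s r)
    ⟨y, by simp only [beyond, Finset.mem_filter]; exact ⟨hy, hqr, by grind [h.ori_rsp], hsp⟩⟩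
  simp only [beyond, Finset.mem_filter] at hb hmin
  exact h.not_isKHole_five hC <| h.isKHole_five hC hb.1 hb.2.1 hb.2.2.1 hb.2.2.2
    fun z hz h₁ h₂ h₃ => hmin z ⟨hz, h₁, h₂, h₃⟩

end

/-! ### Empty sectors -/

/-- `p` is a point of `T` with smallest first coordinate. -/
structure IsLeftmost (T : Finset Pt) (p : Pt) : Prop where
  mem : p ∈ T
  le : ∀ z ∈ T, p.1 ≤ z.1

theorem exists_isLeftmost {T : Finset Pt} (hT : T.Nonempty) : ∃ p, IsLeftmost T p := by
  obtain ⟨p, hp, hle⟩ := T.exists_min_image Prod.fst hT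
  exact ⟨p, hp, hle⟩

/-- The points of `C` in the open sector with apex `a` swept counterclockwise, by less than a half
turn, from the ray through `u` to the ray through `w`. -/
def sector (C : Finset Pt) (a u w : Pt) : Finset Pt :=
  C.filter fun z => 0 < ori a u z ∧ 0 < ori w a z

/-- The sector at `a` from `u` to `w`, spanned by points of `C` to the left of the vertical line at
`x₀`, contains no further points of `C` to the left of that line. -/
structure EmptySector (x₀ : ℝ) (C : Finset Pt) (a u w : Pt) : Prop where
  apex_mem : a ∈ C
  left_mem : u ∈ C
  right_mem : w ∈ C
  apex_lt : a.1 < x₀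
  left_lt : u.1 < x₀
  right_lt : w.1 < x₀
  ori_pos : 0 < ori a u w
  lt_of_mem : ∀ z ∈ sector C a u w, x₀ < z.1

/-- `z` is a point of `C` beyond the sector at `a` from `u` to `w`, counterclockwise of it by less
than a half turn from either side. -/
structure Beyond (C : Finset Pt) (a u w z : Pt) : Prop where
  mem : z ∈ C
  left : 0 < ori a u z
  right : 0 < ori a w z

section

variable {x₀ : ℝ} {C : Finset Pt} {a u w p q r s t y z : Pt}

@[grind]
theorem mem_sector : z ∈ sector C a u w ↔ z ∈ C ∧ 0 < ori a u z ∧ 0 < ori w a z := by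
  simp [sector]

theorem fst_lt_of_ori_nonneg {c : ℝ} (hu : u.1 < c) (hy : y.1 < c) (hw : w.1 < c)
    (huyw : 0 < ori u y w) (huy : 0 ≤ ori u y z) (hyw : 0 ≤ ori y w z) (hwu : 0 ≤ ori w u z) :
    z.1 < c :=
  mem_of_ori_nonneg (convex_fst_lt c) hu hy hw huyw huy hyw hwu

theorem fst_le_of_ori_nonneg {c : ℝ} (hu : u.1 ≤ c) (hy : y.1 ≤ c) (hw : w.1 ≤ c)
    (huyw : 0 < ori u y w) (huy : 0 ≤ ori u y z) (hyw : 0 ≤ ori y w z) (hwu : 0 ≤ ori w u z) :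
    z.1 ≤ c :=
  mem_of_ori_nonneg (convex_fst_le c) hu hy hw huyw huy hyw hwu

theorem DividedHoleFree.mem_sector_of_mem_convexHull (hC : DividedHoleFree x₀ C)
    (h : EmptySector x₀ C a u w) (hz : z ∈ C) {K : Set Pt} (hzK : z ∈ convexHull ℝ K)
    (hK : ∀ k ∈ K, 0 ≤ ori a u k ∧ 0 ≤ ori w a k) (hza : z ≠ a) (hzu : z ≠ u) (hzw : z ≠ w) :
    z ∈ sector C a u w := by
  obtain ⟨haC, huC, hwC, -, -, -, hauw, -⟩ := id h
  have hauz : 0 ≤ ori a u z := convexHull_min (fun k hk => (hK k hk).1) (convex_ori_nonneg a u) hzK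
  have hwaz : 0 ≤ ori w a z := convexHull_min (fun k hk => (hK k hk).2) (convex_ori_nonneg w a) hzK
  grind

namespace EmptySector

theorem ori_pos_of_mem (h : EmptySector x₀ C a u w) (hC : DividedHoleFree x₀ C)
    (hs : s ∈ sector C a u w) : 0 < ori u s w := by
  obtain ⟨-, huC, hwC, hax, hux, hwx, hauw, hS⟩ := id h
  obtain ⟨hsC, hus, hws⟩ := mem_sector.1 hs
  by_contra
  have huws : 0 < ori u w s := by grind
  exact (hS s hs).not_gt (fst_lt_of_ori_nonneg hax hux hwx hauw hus.le huws.le hws.le)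

theorem dividedFourHole (h : EmptySector x₀ C a u w) (hC : DividedHoleFree x₀ C)
    (hp : IsLeftmost (sector C a u w) p) : DividedFourHole x₀ C a u p w := by
  obtain ⟨haC, huC, hwC, hax, hux, hwx, hauw, hS⟩ := id h
  have hpx := hS p hp.mem
  obtain ⟨hpC, hup, hwp⟩ := mem_sector.1 hp.mem
  refine ⟨by simp [Set.insert_subset_iff, *], hup, h.ori_pos_of_mem hC hp.mem, by grind, by grind,
    fun z hz hzK => ?_, ⟨a, by simp, hax⟩, ⟨p, by simp, hpx⟩⟩
  by_contra hne
  simp only [Set.mem_insert_iff, Set.mem_singleton_iff, not_or] at hne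
  have hzS : z ∈ sector C a u w := hC.mem_sector_of_mem_convexHull h hz hzK
    (by simp only [Set.mem_insert_iff, Set.mem_singleton_iff]; grind) hne.1 hne.2.1 hne.2.2.2
  have hzp : z.1 ≤ p.1 := mem_of_mem_convexHull_quad (convex_fst_le p.1) hzK
    (hax.trans hpx).le (hux.trans hpx).le (le_refl p.1) (hwx.trans hpx).le
  exact hne.2.2.1 (hC.injOn_fst hz hpC (hzp.antisymm (hp.le z hzS)))

theorem ori_pos_of_isLeftmost (h : EmptySector x₀ C a u w) (hC : DividedHoleFree x₀ C)
    (hp : IsLeftmost (sector C a u w) p) (hs : s ∈ sector C a u w) (hsp : s ≠ p) :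
    0 < ori p u s ∧ 0 < ori w p s := by
  obtain ⟨-, huC, hwC, -, -, -, -, -⟩ := id h
  have quad := h.dividedFourHole hC hp
  obtain ⟨hsC, hus, hws⟩ := mem_sector.1 hs
  obtain ⟨hpC, hup, hwp⟩ := mem_sector.1 hp.mem
  have hpw_of_hup (hups : 0 < ori u p s) : 0 < ori p w s := quad.ori_pos hC hsC hups hws
  have hup_of_hpw (hpws : 0 < ori p w s) : 0 < ori u p s :=
    quad.rotate.rotate.rotate.ori_pos hC hsC hus hpws
  have hout (hups : 0 < ori u p s) : False := by
    have := quad.mem_of_ori hsC hus.le hups.le (hpw_of_hup hups).le hws.le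
    grind
  grind

theorem ori_pos_of_isLeftmost_of_beyond (h : EmptySector x₀ C a u w) (hC : DividedHoleFree x₀ C)
    (hp : IsLeftmost (sector C a u w) p) (hz : Beyond C a u w z) : 0 < ori w p z := by
  obtain ⟨hpC, -, hwp⟩ := mem_sector.1 hp.mem
  obtain ⟨hzC, hauz, hawz⟩ := hz
  have hwC := h.right_mem
  by_contra
  have : 0 < ori w a z := (h.dividedFourHole hC hp).rotate.ori_pos hC hzC (by grind) hauz
  grind

theorem ori_pos_of_beyond (h : EmptySector x₀ C a u w) (hC : DividedHoleFree x₀ C)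
    (hs : s ∈ sector C a u w) (hz : Beyond C a u w z) : 0 < ori w s z := by
  obtain ⟨p, hp⟩ := exists_isLeftmost ⟨s, hs⟩
  have hwpz := h.ori_pos_of_isLeftmost_of_beyond hC hp hz
  obtain rfl | hsp := eq_or_ne s p
  · exact hwpz
  have := (h.ori_pos_of_isLeftmost hC hp hs hsp).2
  have := hz.right
  apply ori_pos_of_turn (a := a) (b := p) <;> grind [hp.mem]

theorem ori_pos_left_of_beyond (h : EmptySector x₀ C a u w) (hC : DividedHoleFree x₀ C)
    (hy : y ∈ sector C a u w) (hz : Beyond C a u w z) (huwz : 0 < ori u w z) : 0 < ori u y z := by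
  have := h.ori_pos
  have := h.ori_pos_of_mem hC hy
  have := hz.left
  apply ori_pos_trans_last (b := w) (d := a) <;> grind

theorem ori_pos_isLeftmost_left_of_beyond (h : EmptySector x₀ C a u w) (hC : DividedHoleFree x₀ C)
    (hp : IsLeftmost (sector C a u w) p) (hy : y ∈ sector C a u w) (hyp : y ≠ p)
    (hz : Beyond C a u w z) (huwz : 0 < ori u w z) : 0 < ori p y z := by
  have := h.ori_pos_of_mem hC hp.mem
  have := h.ori_pos_of_isLeftmost hC hp hy hyp
  have := h.ori_pos_of_beyond hC hp.mem hz
  have := h.ori_pos_left_of_beyond hC hp.mem hz huwz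
  apply ori_pos_of_spanning (a := w) (b := u) <;> grind

theorem dividedFourHole_of_fork (h : EmptySector x₀ C a u w) (hC : DividedHoleFree x₀ C)
    (hp : IsLeftmost (sector C a u w) p) (hs : s ∈ sector C a u w) (ht : t ∈ sector C a u w)
    (hsp : s ≠ p) (htp : t ≠ p) (hpst : 0 < ori p s t) (hstw : 0 < ori s t w)
    (hempty : ∀ z ∈ sector C a u w, z ∈ convexHull ℝ {w, p, s, t} → z = p ∨ z = s ∨ z = t) :
    DividedFourHole x₀ C w p s t := by
  obtain ⟨haC, -, hwC, -, -, hwx, hauw, hS⟩ := id h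
  obtain ⟨hpC, hup, hwp⟩ := mem_sector.1 hp.mem
  obtain ⟨hsC, hus, hws⟩ := mem_sector.1 hs
  obtain ⟨htC, hut, hwt⟩ := mem_sector.1 ht
  have hwps := (h.ori_pos_of_isLeftmost hC hp hs hsp).2
  have hwpt := (h.ori_pos_of_isLeftmost hC hp ht htp).2
  refine ⟨by simp [Set.insert_subset_iff, *], hwps, hpst, hstw, by grind, fun z hz hzK => ?_,
    ⟨w, by simp, hwx⟩, ⟨p, by simp, hS p hp.mem⟩⟩
  have hauz : 0 < ori a u z := mem_of_mem_convexHull_quad (convex_ori_pos a u) hzK hauw hup hus hut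
  have hwaz : 0 ≤ ori w a z :=
    mem_of_mem_convexHull_quad (convex_ori_nonneg w a) hzK (by simp) hwp.le hws.le hwt.le
  obtain rfl | hzw := eq_or_ne z w
  · simp
  have := hempty z (by grind) hzK
  simpa [hzw] using this

theorem ori_pos_of_dividedFourHole (h : EmptySector x₀ C a u w) (hC : DividedHoleFree x₀ C)
    (quad : DividedFourHole x₀ C w p s t) (hp : IsLeftmost (sector C a u w) p)
    (hs : s ∈ sector C a u w) (ht : t ∈ sector C a u w)
    (hz : Beyond C a u w z) : 0 < ori t s z := by
  have := hz.mem
  have hwsz := h.ori_pos_of_beyond hC hs hz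
  have hwtz := h.ori_pos_of_beyond hC ht hz
  have hwpz := h.ori_pos_of_beyond hC hp.mem hz
  have := quad.ori_qrs
  by_contra
  have : 0 < ori t w z := quad.rotate.ori_pos hC hz.mem (by grind) hwpz
  grind

theorem ori_pos_of_fork (h : EmptySector x₀ C a u w) (hC : DividedHoleFree x₀ C)
    (hp : IsLeftmost (sector C a u w) p) (hs : s ∈ sector C a u w) (ht : t ∈ sector C a u w)
    (hsp : s ≠ p) (htp : t ≠ p) (hpst : 0 < ori p s t)
    (hempty : ∀ z ∈ sector C a u w, z ∈ convexHull ℝ {w, p, s, t} → z = p ∨ z = s ∨ z = t)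
    (hr : Beyond C a u w r) (hrx : r.1 < x₀) : 0 < ori t s r := by
  obtain ⟨hsC, -, hws⟩ := mem_sector.1 hs
  obtain ⟨htC, -, hwt⟩ := mem_sector.1 ht
  have hwC := h.right_mem
  obtain hstw | hswt : 0 < ori s t w ∨ 0 < ori s w t := by grind
  · exact h.ori_pos_of_dividedFourHole hC
      (h.dividedFourHole_of_fork hC hp hs ht hsp htp hpst hstw hempty) hp hs ht hr
  by_contra
  have hwps := (h.ori_pos_of_isLeftmost hC hp hs hsp).2
  have hwpt := (h.ori_pos_of_isLeftmost hC hp ht htp).2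
  have hwsr := h.ori_pos_of_beyond hC hs hr
  have hwtr := h.ori_pos_of_beyond hC ht hr
  have hts : t.1 ≤ s.1 := fst_le_of_ori_nonneg (h.right_lt.trans (h.lt_of_mem s hs)).le
    (hp.le s hs) le_rfl hwps hwpt.le hpst.le hswt.le
  have hst : s.1 ≤ t.1 := fst_le_of_ori_nonneg (h.right_lt.trans (h.lt_of_mem t ht)).le le_rfl
    (hrx.trans (h.lt_of_mem t ht)).le hwtr (by grind) (by grind) (by grind)
  have := hC.injOn_fst hsC htC (hst.antisymm hts)
  grind

theorem fst_le_of_fork (h : EmptySector x₀ C a u w) (hC : DividedHoleFree x₀ C)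
    (hp : IsLeftmost (sector C a u w) p) (hs : s ∈ sector C a u w) (ht : t ∈ sector C a u w)
    (hsp : s ≠ p) (htp : t ≠ p) (hpst : 0 < ori p s t)
    (hempty : ∀ z ∈ sector C a u w, z ∈ convexHull ℝ {w, p, s, t} → z = p ∨ z = s ∨ z = t)
    (hr : Beyond C a u w r) (hrx : r.1 < x₀) (huwr : 0 < ori u w r) : t.1 ≤ s.1 := by
  have htsr := h.ori_pos_of_fork hC hp hs ht hsp htp hpst hempty hr hrx
  have hpsr := h.ori_pos_isLeftmost_left_of_beyond hC hp hs hsp hr huwr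
  have hptr := h.ori_pos_isLeftmost_left_of_beyond hC hp ht htp hr huwr
  exact fst_le_of_ori_nonneg (hp.le s hs) le_rfl (hrx.trans (h.lt_of_mem s hs)).le hpsr hpst.le
    (by grind) (by grind)

theorem ori_pos_of_isLeftmost_erase (h : EmptySector x₀ C a u w) (hC : DividedHoleFree x₀ C)
    (hp : IsLeftmost (sector C a u w) p) (ht : IsLeftmost ((sector C a u w).erase p) t)
    (hr : Beyond C a u w r) (hrx : r.1 < x₀) (huwr : 0 < ori u w r)
    (hy : y ∈ sector C a u w) (hyp : y ≠ p) (hyt : y ≠ t) : 0 < ori p y t := by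
  obtain ⟨htp, htS⟩ := Finset.mem_erase.1 ht.mem
  have hpC := (mem_sector.1 hp.mem).1
  have htC := (mem_sector.1 htS).1
  by_contra
  obtain ⟨z, hz, hzmin⟩ := exists_isLeftmost (T := {z ∈ sector C a u w | 0 < ori p t z})
    ⟨y, by grind⟩
  obtain ⟨hzS, hptz⟩ := Finset.mem_filter.1 hz
  have hzp : z ≠ p := (ne_of_ori_pos hptz).2.1.symm
  have hzC := (mem_sector.1 hzS).1
  have hwpt := (h.ori_pos_of_isLeftmost hC hp htS htp).2
  have hzt : z.1 ≤ t.1 := by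
    refine h.fst_le_of_fork hC hp htS hzS htp hzp hptz (fun v hv hvK => ?_) hr hrx huwr
    by_contra hne
    have hptv : 0 ≤ ori p t v := mem_of_mem_convexHull_quad (convex_ori_nonneg p t) hvK
      (by grind) (by simp) (by simp) hptz.le
    have hvz : v.1 ≤ z.1 := mem_of_mem_convexHull_quad (convex_fst_le z.1) hvK
      (h.right_lt.trans (h.lt_of_mem z hzS)).le (hp.le z hzS)
      (ht.le z (Finset.mem_erase.2 ⟨hzp, hzS⟩)) (le_refl z.1)
    have hvC := (mem_sector.1 hv).1
    have := hC.injOn_fst hvC hzC (hvz.antisymm (hzmin v (by grind)))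
    grind
  have := hC.injOn_fst hzC htC (hzt.antisymm (ht.le z (Finset.mem_erase.2 ⟨hzp, hzS⟩)))
  grind

end EmptySector

end

/-! ### Reflection -/

/-- Reflection in the first coordinate axis, which interchanges the two sides of a sector. -/
def reflect : Pt ≃ₗ[ℝ] Pt := (LinearEquiv.refl ℝ ℝ).prodCongr (LinearEquiv.neg ℝ)

@[simp] theorem reflect_fst (z : Pt) : (reflect z).1 = z.1 := rfl

@[simp] theorem reflect_snd (z : Pt) : (reflect z).2 = -z.2 := rfl

@[simp] theorem ori_reflect (a b c : Pt) : ori (reflect a) (reflect b) (reflect c) = ori b a c := by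
  simp only [ori_def, reflect_fst, reflect_snd]; ring

theorem GenPos.image {P : Set Pt} (h : GenPos P) (e : Pt ≃ₗ[ℝ] Pt) : GenPos (e '' P) := by
  rintro _ ⟨p, hp, rfl⟩ _ ⟨q, hq, rfl⟩ _ ⟨r, hr, rfl⟩ hpq hpr hqr hcol
  refine h p hp q hq r hr (ne_of_apply_ne e hpq) (ne_of_apply_ne e hpr) (ne_of_apply_ne e hqr) ?_
  obtain ⟨z, v, hv⟩ := (collinear_iff_exists_forall_eq_smul_vadd _).1 hcol
  refine (collinear_iff_exists_forall_eq_smul_vadd _).2 ⟨e.symm z, e.symm v, ?_⟩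
  intro x hx
  obtain ⟨c, hc⟩ := hv (e x) (by simpa using hx)
  exact ⟨c, by simpa using congrArg e.symm hc⟩

theorem ConvexPos.image {P : Set Pt} (h : ConvexPos P) (e : Pt ≃ₗ[ℝ] Pt) : ConvexPos (e '' P) := by
  rintro _ ⟨p, hp, rfl⟩ hmem
  rw [← Set.image_singleton, ← Set.image_sdiff e.injective, ← LinearEquiv.coe_coe,
    ← LinearMap.image_convexHull] at hmem
  exact h p hp (e.injective.mem_set_image.1 hmem)

theorem IsKHole.image {k : ℕ} {P H : Finset Pt} (h : IsKHole k P H) (e : Pt ≃ₗ[ℝ] Pt) :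
    IsKHole k (P.image e) (H.image e) := by
  obtain ⟨hHP, hcard, hconv, hempty⟩ := h
  refine ⟨Finset.image_subset_image hHP, by rwa [Finset.card_image_of_injective _ e.injective],
    by simpa using hconv.image e, ?_⟩
  simp only [Finset.forall_mem_image, e.injective.mem_finset_image, Finset.coe_image]
  intro p hp hpH hmem
  rw [← LinearEquiv.coe_coe, ← LinearMap.image_convexHull] at hmem
  exact hempty p hp hpH (e.injective.mem_set_image.1 hmem)

section

variable {x₀ : ℝ} {C : Finset Pt} {a u w p q r s t y z : Pt}

theorem DividedHoleFree.image_reflect (h : DividedHoleFree x₀ C) :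
    DividedHoleFree x₀ (C.image reflect) := by
  refine ⟨by simpa using h.genPos.image reflect, ?_, fun H hH hleft hright => ?_⟩
  · simp only [Finset.coe_image]
    rintro _ ⟨p, hp, rfl⟩ _ ⟨q, hq, rfl⟩ hpq
    rw [h.injOn_fst hp hq hpq]
  have hsymm : (C.image reflect).image reflect.symm = C := by
    simp [Finset.image_image, Function.comp_def]
  refine h.not_divided _ (hsymm ▸ hH.image reflect.symm) ?_ ?_
  · obtain ⟨p, hp, hpx⟩ := hleft
    exact ⟨reflect.symm p, Finset.mem_image_of_mem _ hp, hpx⟩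
  · obtain ⟨p, hp, hpx⟩ := hright
    exact ⟨reflect.symm p, Finset.mem_image_of_mem _ hp, hpx⟩

theorem IsLeftmost.image_reflect {T : Finset Pt} (h : IsLeftmost T p) :
    IsLeftmost (T.image reflect) (reflect p) :=
  ⟨Finset.mem_image_of_mem _ h.mem, Finset.forall_mem_image.2 h.le⟩

theorem sector_image_reflect :
    sector (C.image reflect) (reflect a) (reflect w) (reflect u) =
      (sector C a u w).image reflect := by
  ext z
  obtain ⟨z, rfl⟩ := reflect.surjective z
  simp only [mem_sector, reflect.injective.mem_finset_image, ori_reflect]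
  grind

theorem EmptySector.image_reflect (h : EmptySector x₀ C a u w) :
    EmptySector x₀ (C.image reflect) (reflect a) (reflect w) (reflect u) where
  apex_mem := Finset.mem_image_of_mem _ h.apex_mem
  left_mem := Finset.mem_image_of_mem _ h.right_mem
  right_mem := Finset.mem_image_of_mem _ h.left_mem
  apex_lt := h.apex_lt
  left_lt := h.right_lt
  right_lt := h.left_lt
  ori_pos := by simpa [ori_rotate] using ori_pos_rotate h.ori_pos
  lt_of_mem := by
    rw [sector_image_reflect]
    exact Finset.forall_mem_image.2 h.lt_of_mem

theorem Beyond.image_reflect (hz : z ∈ C) (hzu : 0 < ori a z u) (hzw : 0 < ori a z w) :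
    Beyond (C.image reflect) (reflect a) (reflect w) (reflect u) (reflect z) :=
  ⟨Finset.mem_image_of_mem _ hz, by grind [ori_reflect], by grind [ori_reflect]⟩

namespace EmptySector

theorem ori_pos_of_clockwise_beyond (h : EmptySector x₀ C a u w) (hC : DividedHoleFree x₀ C)
    (hs : s ∈ sector C a u w) (hz : z ∈ C) (hzu : 0 < ori a z u) (hzw : 0 < ori a z w) :
    0 < ori s u z := by
  have := h.image_reflect.ori_pos_of_beyond hC.image_reflect
    (sector_image_reflect ▸ Finset.mem_image_of_mem _ hs) (Beyond.image_reflect hz hzu hzw)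
  simpa using this

theorem card_sector_le_two_of_beyond_of_clockwise (h : EmptySector x₀ C a u w)
    (hC : DividedHoleFree x₀ C) (hr : Beyond C a u w r) (hrx : r.1 < x₀) (huwr : 0 < ori u w r)
    (hz : z ∈ C) (hzx : z.1 < x₀) (hzu : 0 < ori a z u) (hzw : 0 < ori a z w)
    (huwz : 0 < ori u w z) : (sector C a u w).card ≤ 2 := by
  by_contra! hcard
  obtain ⟨p, hp⟩ := exists_isLeftmost (Finset.card_pos.1 (by lia : 0 < (sector C a u w).card))
  have hcard_p := Finset.card_erase_of_mem hp.mem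
  obtain ⟨t, ht⟩ := exists_isLeftmost
    (Finset.card_pos.1 (by lia : 0 < ((sector C a u w).erase p).card))
  have hcard_t := Finset.card_erase_of_mem ht.mem
  obtain ⟨y, hy⟩ := Finset.card_pos.1 (by lia : 0 < (((sector C a u w).erase p).erase t).card)
  simp only [Finset.mem_erase] at hy
  obtain ⟨hyt, hyp, hyS⟩ := hy
  have hpyt := h.ori_pos_of_isLeftmost_erase hC hp ht hr hrx huwr hyS hyp hyt
  have hpty : 0 < ori (reflect p) (reflect y) (reflect t) := by
    refine h.image_reflect.ori_pos_of_isLeftmost_erase hC.image_reflect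
      (by rw [sector_image_reflect]; exact hp.image_reflect) ?_
      (Beyond.image_reflect hz hzu hzw) hzx ?_
      (sector_image_reflect ▸ Finset.mem_image_of_mem _ hyS) (reflect.injective.ne hyp)
      (reflect.injective.ne hyt)
    · rw [sector_image_reflect, ← Finset.image_erase reflect.injective]
      exact ht.image_reflect
    · grind [ori_reflect]
  grind [ori_reflect]

end EmptySector

end

/-! ### Fans of three empty sectors

In the names of this section `ori_xyz` stands for `0 < ori x y z`. -/

/-- Three consecutive empty sectors at `a`, bounded by the rays through `u`, `w`, `r`, `q` in
counterclockwise order, where `a`, `u`, `w`, `r`, `q` span a convex pentagon. -/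
structure EmptyFan (x₀ : ℝ) (C : Finset Pt) (a u w r q : Pt) : Prop where
  first : EmptySector x₀ C a u w
  second : EmptySector x₀ C a w r
  third : EmptySector x₀ C a r q
  ori_auq : 0 < ori a u q
  ori_awq : 0 < ori a w q
  ori_uwr : 0 < ori u w r
  ori_uwq : 0 < ori u w q
  ori_urq : 0 < ori u r q
  ori_wrq : 0 < ori w r q

/-- A fan of empty sectors in a point set without divided 5-holes, together with the three leftmost
points `p`, `t`, `s`, in this order, of its first sector. -/
structure CrowdedFan (x₀ : ℝ) (C : Finset Pt) (a u w r q p t s : Pt) : Prop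
    extends EmptyFan x₀ C a u w r q where
  holeFree : DividedHoleFree x₀ C
  isLeftmost_p : IsLeftmost (sector C a u w) p
  isLeftmost_t : IsLeftmost ((sector C a u w).erase p) t
  isLeftmost_s : IsLeftmost (((sector C a u w).erase p).erase t) s

section

variable {x₀ : ℝ} {C : Finset Pt} {a u w r q p t s e y z : Pt}

namespace EmptyFan

theorem ori_aur (h : EmptyFan x₀ C a u w r q) : 0 < ori a u r :=
  ori_pos_trans_last h.first.ori_pos h.second.ori_pos h.ori_auq h.ori_awq h.third.ori_pos

theorem beyond_r (h : EmptyFan x₀ C a u w r q) : Beyond C a u w r :=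
  ⟨h.second.right_mem, h.ori_aur, h.second.ori_pos⟩

theorem beyond_q (h : EmptyFan x₀ C a u w r q) : Beyond C a u w q :=
  ⟨h.third.right_mem, h.ori_auq, h.ori_awq⟩

theorem second_beyond_q (h : EmptyFan x₀ C a u w r q) : Beyond C a w r q :=
  ⟨h.third.right_mem, h.ori_awq, h.third.ori_pos⟩

theorem ori_q_of_mem_first (h : EmptyFan x₀ C a u w r q) (hz : z ∈ sector C a u w) :
    0 < ori a z q := by
  have := mem_sector.1 hz
  exact ori_pos_trans_first this.2.1 h.first.ori_pos h.ori_auq (by grind) h.ori_awq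

theorem ori_r_of_mem_first (h : EmptyFan x₀ C a u w r q) (hz : z ∈ sector C a u w) :
    0 < ori a z r := by
  have := mem_sector.1 hz
  exact ori_pos_trans_first this.2.1 h.first.ori_pos h.ori_aur (by grind) h.second.ori_pos

theorem ori_q_of_mem_second (h : EmptyFan x₀ C a u w r q) (hz : z ∈ sector C a w r) :
    0 < ori a z q := by
  have := mem_sector.1 hz
  exact ori_pos_trans_first this.2.1 h.second.ori_pos h.ori_awq (by grind) h.third.ori_pos

theorem beyond_of_mem_second (h : EmptyFan x₀ C a u w r q) (hz : z ∈ sector C a w r) :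
    Beyond C a u w z := by
  obtain ⟨hzC, hwz, -⟩ := mem_sector.1 hz
  exact ⟨hzC, ori_pos_trans_last h.first.ori_pos hwz h.ori_auq h.ori_awq
    (h.ori_q_of_mem_second hz), hwz⟩

theorem beyond_of_mem_third (h : EmptyFan x₀ C a u w r q) (hz : z ∈ sector C a r q) :
    Beyond C a u w z := by
  obtain ⟨hzC, hrz, hqz⟩ := mem_sector.1 hz
  exact ⟨hzC, ori_pos_trans_last h.ori_aur hrz h.ori_auq h.third.ori_pos (by grind),
    ori_pos_trans_last h.second.ori_pos hrz h.ori_awq h.third.ori_pos (by grind)⟩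

theorem mem_sector_of_mem_convexHull_of_ori_r (h : EmptyFan x₀ C a u w r q)
    (hC : DividedHoleFree x₀ C) (hz : z ∈ C) {K : Set Pt} (hzK : z ∈ convexHull ℝ K)
    (hK : ∀ k ∈ K, 0 < ori a u k ∧ 0 ≤ ori r a k) :
    z ∈ sector C a u w ∨ z ∈ sector C a w r ∨ z = w ∨ z = r := by
  have hauz : 0 < ori a u z := convexHull_min (fun k hk => (hK k hk).1) (convex_ori_pos a u) hzK
  have hraz : 0 ≤ ori r a z := convexHull_min (fun k hk => (hK k hk).2) (convex_ori_nonneg r a) hzK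
  have := h.first.apex_mem
  have := h.first.right_mem
  have := h.second.right_mem
  have := h.second.ori_pos
  grind

theorem mem_sector_of_mem_convexHull (h : EmptyFan x₀ C a u w r q) (hC : DividedHoleFree x₀ C)
    (hz : z ∈ C) {K : Set Pt} (hzK : z ∈ convexHull ℝ K)
    (hK : ∀ k ∈ K, 0 < ori a u k ∧ 0 ≤ ori q a k) :
    z ∈ sector C a u w ∨ z ∈ sector C a w r ∨ z ∈ sector C a r q ∨ z = w ∨ z = r ∨ z = q := by
  have hauz : 0 < ori a u z := convexHull_min (fun k hk => (hK k hk).1) (convex_ori_pos a u) hzK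
  have hqaz : 0 ≤ ori q a z := convexHull_min (fun k hk => (hK k hk).2) (convex_ori_nonneg q a) hzK
  have := h.first.apex_mem
  have := h.first.right_mem
  have := h.second.right_mem
  have := h.third.right_mem
  have := h.third.ori_pos
  have := h.second.ori_pos
  grind

end EmptyFan

namespace CrowdedFan

theorem mem_p (h : CrowdedFan x₀ C a u w r q p t s) : p ∈ sector C a u w := h.isLeftmost_p.mem

theorem mem_t (h : CrowdedFan x₀ C a u w r q p t s) : t ∈ sector C a u w ∧ t ≠ p := by
  simpa [and_comm] using h.isLeftmost_t.mem

theorem mem_s (h : CrowdedFan x₀ C a u w r q p t s) : s ∈ sector C a u w ∧ s ≠ p ∧ s ≠ t := by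
  have := h.isLeftmost_s.mem
  grind

theorem eq_of_fst_le_s (h : CrowdedFan x₀ C a u w r q p t s) (hz : z ∈ sector C a u w)
    (hzs : z.1 ≤ s.1) : z = p ∨ z = t ∨ z = s := by
  by_contra! hne
  have hsz : s.1 ≤ z.1 := h.isLeftmost_s.le z (by grind)
  exact hne.2.2 (h.holeFree.injOn_fst (mem_sector.1 hz).1 (mem_sector.1 h.mem_s.1).1
    (hzs.antisymm hsz))

theorem fst_t_lt (h : CrowdedFan x₀ C a u w r q p t s) : t.1 < s.1 := by
  refine (h.isLeftmost_t.le s (by grind [h.mem_s])).lt_of_ne fun hts => h.mem_s.2.2 ?_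
  exact h.holeFree.injOn_fst (mem_sector.1 h.mem_s.1).1 (mem_sector.1 h.mem_t.1).1 hts.symm

theorem ori_pyt (h : CrowdedFan x₀ C a u w r q p t s) (hy : y ∈ sector C a u w) (hyp : y ≠ p)
    (hyt : y ≠ t) : 0 < ori p y t :=
  h.first.ori_pos_of_isLeftmost_erase h.holeFree h.isLeftmost_p h.isLeftmost_t h.beyond_r
    h.third.left_lt h.ori_uwr hy hyp hyt

theorem ori_pyr (h : CrowdedFan x₀ C a u w r q p t s) (hy : y ∈ sector C a u w) (hyp : y ≠ p) :
    0 < ori p y r :=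
  h.first.ori_pos_isLeftmost_left_of_beyond h.holeFree h.isLeftmost_p hy hyp h.beyond_r h.ori_uwr

theorem ori_put (h : CrowdedFan x₀ C a u w r q p t s) : 0 < ori p u t :=
  (h.first.ori_pos_of_isLeftmost h.holeFree h.isLeftmost_p h.mem_t.1 h.mem_t.2).1

theorem ori_wpt (h : CrowdedFan x₀ C a u w r q p t s) : 0 < ori w p t :=
  (h.first.ori_pos_of_isLeftmost h.holeFree h.isLeftmost_p h.mem_t.1 h.mem_t.2).2

theorem ori_pus (h : CrowdedFan x₀ C a u w r q p t s) : 0 < ori p u s :=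
  (h.first.ori_pos_of_isLeftmost h.holeFree h.isLeftmost_p h.mem_s.1 h.mem_s.2.1).1

theorem ori_upw (h : CrowdedFan x₀ C a u w r q p t s) : 0 < ori u p w :=
  h.first.ori_pos_of_mem h.holeFree h.mem_p

theorem ori_utw (h : CrowdedFan x₀ C a u w r q p t s) : 0 < ori u t w :=
  h.first.ori_pos_of_mem h.holeFree h.mem_t.1

theorem ori_usw (h : CrowdedFan x₀ C a u w r q p t s) : 0 < ori u s w :=
  h.first.ori_pos_of_mem h.holeFree h.mem_s.1

theorem ori_pst (h : CrowdedFan x₀ C a u w r q p t s) : 0 < ori p s t :=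
  h.ori_pyt h.mem_s.1 h.mem_s.2.1 h.mem_s.2.2

theorem ori_ust (h : CrowdedFan x₀ C a u w r q p t s) : 0 < ori u s t := by
  have huC := h.first.left_mem
  have hsS := h.mem_s.1
  have htS := h.mem_t.1
  have hsx := h.first.left_lt.trans (h.first.lt_of_mem t htS)
  have hpus := h.ori_pus
  have hput := h.ori_put
  have hpst := h.ori_pst
  by_contra
  have huts : 0 < ori u t s := by grind [h.holeFree]
  have : s.1 ≤ t.1 := fst_le_of_ori_nonneg le_rfl (h.isLeftmost_p.le t htS) hsx.le
    (by grind) (by grind) hpus.le huts.le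
  exact this.not_gt h.fst_t_lt

theorem dividedFourHole_stpu (h : CrowdedFan x₀ C a u w r q p t s) :
    DividedFourHole x₀ C s t p u := by
  obtain ⟨haC, huC, -, -, hux, -, hauw, hS⟩ := id h.first
  have hsS := h.mem_s.1
  have htS := h.mem_t.1
  obtain ⟨hpC, hup, hwp⟩ := mem_sector.1 h.mem_p
  obtain ⟨htC, hut, hwt⟩ := mem_sector.1 htS
  obtain ⟨hsC, hus, hws⟩ := mem_sector.1 hsS
  have hput := h.ori_put
  have hpst := h.ori_pst
  refine ⟨by simp [Set.insert_subset_iff, *], by grind, by grind, h.ori_pus, h.ori_ust,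
    fun z hz hzK => ?_, ⟨u, by simp, hux⟩, ⟨p, by simp, hS p h.mem_p⟩⟩
  have hwaz : 0 < ori w a z :=
    mem_of_mem_convexHull_quad (convex_ori_pos w a) hzK hws hwt hwp (by grind)
  have hauz : 0 ≤ ori a u z :=
    mem_of_mem_convexHull_quad (convex_ori_nonneg a u) hzK hus.le hut.le hup.le (by simp)
  have hzs : z.1 ≤ s.1 := mem_of_mem_convexHull_quad (convex_fst_le s.1) hzK (le_refl s.1)
    h.fst_t_lt.le (h.isLeftmost_p.le s hsS) (hux.trans (hS s hsS)).le
  obtain rfl | hzu := eq_or_ne z u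
  · simp
  have := h.eq_of_fst_le_s (z := z) (by grind [h.holeFree]) hzs
  grind

theorem ori_of_mem_of_ne (h : CrowdedFan x₀ C a u w r q p t s) (hy : y ∈ sector C a u w)
    (hyp : y ≠ p) (hyt : y ≠ t) (hys : y ≠ s) : 0 < ori s u y ∧ 0 < ori t s y := by
  have hyC := (mem_sector.1 hy).1
  have hpuy := (h.first.ori_pos_of_isLeftmost h.holeFree h.isLeftmost_p hy hyp).1
  have hpyt := h.ori_pyt hy hyp hyt
  have quad := h.dividedFourHole_stpu
  have hsC : s ∈ C := quad.subset (by simp)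
  have htC : t ∈ C := quad.subset (by simp)
  have huC := h.first.left_mem
  have hust := h.ori_ust
  have hus_of_hst (hsty : 0 < ori s t y) : 0 < ori u s y :=
    quad.rotate.ori_pos h.holeFree hyC hpuy hsty
  have hst_of_hus (husy : 0 < ori u s y) : 0 < ori s t y :=
    quad.rotate.rotate.ori_pos h.holeFree hyC husy (by grind)
  have hout (hsty : 0 < ori s t y) : False := by
    have := quad.mem_of_ori hyC hsty.le (by grind) hpuy.le (hus_of_hst hsty).le
    grind
  grind [h.holeFree]

theorem ori_pte (h : CrowdedFan x₀ C a u w r q p t s) (he : Beyond C a u w e)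
    (huse : 0 < ori u s e) : 0 < ori p t e := by
  have hpC := (mem_sector.1 h.mem_p).1
  have htC := (mem_sector.1 h.mem_t.1).1
  have hupw := h.ori_upw
  have hput := h.ori_put
  have hwpt := h.ori_wpt
  have hwpe := h.first.ori_pos_of_beyond h.holeFree h.mem_p he
  have hwte := h.first.ori_pos_of_beyond h.holeFree h.mem_t.1 he
  have quad := h.dividedFourHole_stpu
  by_contra
  have htpe : 0 < ori t p e := by grind [h.holeFree, he.mem]
  have hpue : 0 < ori p u e :=
    ori_pos_of_spanning (a := t) (b := w) (by grind) (by grind) (by grind) (by grind) (by grind)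
  have hste : 0 < ori s t e := quad.rotate.rotate.ori_pos h.holeFree he.mem huse htpe
  have := quad.mem_of_ori he.mem hste.le htpe.le hpue.le huse.le
  grind

theorem ori_tse_of_ori_sue (h : CrowdedFan x₀ C a u w r q p t s) (he : Beyond C a u w e)
    (hsue : 0 < ori s u e) : 0 < ori t s e := by
  have hsS := h.mem_s.1
  obtain ⟨-, hup, -⟩ := mem_sector.1 h.mem_p
  obtain ⟨hsC, hus, -⟩ := mem_sector.1 hsS
  have hpus := h.ori_pus
  have hwse := h.first.ori_pos_of_beyond h.holeFree hsS he
  have hwte := h.first.ori_pos_of_beyond h.holeFree h.mem_t.1 he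
  have htC := (mem_sector.1 h.mem_t.1).1
  have hust := h.ori_ust
  have heC := he.mem
  have haue := he.left
  have hpue : 0 < ori u e p :=
    ori_pos_trans_last (b := s) (d := a) (by grind) (by grind) (by grind) (by grind) (by grind)
  by_contra
  have : 0 < ori u s e :=
    h.dividedFourHole_stpu.rotate.ori_pos h.holeFree heC (by grind) (by grind [h.holeFree])
  grind

theorem ori_tse (h : CrowdedFan x₀ C a u w r q p t s) (he : Beyond C a u w e) :
    0 < ori t s e := by
  obtain ⟨hsS, hsp, hst⟩ := h.mem_s
  obtain ⟨htS, htp⟩ := h.mem_t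
  have hwse := h.first.ori_pos_of_beyond h.holeFree hsS he
  have hwte := h.first.ori_pos_of_beyond h.holeFree htS he
  have heC := he.mem
  have hsC := (mem_sector.1 hsS).1
  have htC := (mem_sector.1 htS).1
  have huC := h.first.left_mem
  have hwC := h.first.right_mem
  have husw := h.ori_usw
  have hust := h.ori_ust
  obtain hstw | hswt : 0 < ori s t w ∨ 0 < ori s w t := by grind [h.holeFree]
  · refine h.first.ori_pos_of_dividedFourHole h.holeFree
      (h.first.dividedFourHole_of_fork h.holeFree h.isLeftmost_p hsS htS hsp htp h.ori_pst hstw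
        fun z hz hzK => ?_) h.isLeftmost_p hsS htS he
    have hzs : z.1 ≤ s.1 := mem_of_mem_convexHull_quad (convex_fst_le s.1) hzK
      (h.first.right_lt.trans (h.first.lt_of_mem s hsS)).le (h.isLeftmost_p.le s hsS)
      (le_refl s.1) h.fst_t_lt.le
    grind [h.eq_of_fst_le_s hz hzs]
  have haue := he.left
  have hus := (mem_sector.1 hsS).2.1
  obtain hsue | huse : 0 < ori s u e ∨ 0 < ori u s e := by grind [h.holeFree]
  · exact h.ori_tse_of_ori_sue he hsue
  by_contra
  have : 0 < ori u s s := mem_of_ori_nonneg (convex_ori_pos u s) husw hust huse hwte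
    (by grind) (by grind [h.holeFree]) (by grind)
  simp at this

theorem dividedFourHole_of_ori_rqp (h : CrowdedFan x₀ C a u w r q p t s) (hrqp : 0 < ori r q p) :
    DividedFourHole x₀ C r q w p := by
  have hpS := h.mem_p
  obtain ⟨hpC, hup, -⟩ := mem_sector.1 hpS
  have hwpr := h.first.ori_pos_of_beyond h.holeFree hpS h.beyond_r
  have hwpq := h.first.ori_pos_of_beyond h.holeFree hpS h.beyond_q
  have hwrq := h.ori_wrq
  have hwC := h.first.right_mem
  have hrC := h.second.right_mem
  have hqC := h.third.right_mem
  refine ⟨by simp [Set.insert_subset_iff, *], by grind, by grind, hwpr, by grind,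
    fun z hz hzK => ?_, ⟨w, by simp, h.first.right_lt⟩, ⟨p, by simp, h.first.lt_of_mem p hpS⟩⟩
  have hprz : 0 ≤ ori p r z := mem_of_mem_convexHull_quad (convex_ori_nonneg p r) hzK (by simp)
    (by grind) (by grind) (by simp)
  have hrqz : 0 ≤ ori r q z := mem_of_mem_convexHull_quad (convex_ori_nonneg r q) hzK (by simp)
    (by simp) (by grind) (by grind)
  have hcone : ∀ k ∈ ({r, q, w, p} : Set Pt), 0 < ori a u k ∧ 0 ≤ ori q a k := by
    have := h.ori_aur
    have := h.ori_auq
    have := h.ori_awq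
    have := h.first.ori_pos
    have := h.third.ori_pos
    have := h.ori_q_of_mem_first hpS
    simp only [Set.mem_insert_iff, Set.mem_singleton_iff]
    grind [ori_self_outer]
  obtain hzS | hzS | hzS | hz | hz | hz := h.mem_sector_of_mem_convexHull h.holeFree hz hzK hcone
  · by_contra
    have := h.ori_pyr hzS (by grind)
    grind
  · have := h.second.ori_pos_of_beyond h.holeFree hzS h.second_beyond_q
    grind
  · have := h.third.ori_pos_of_mem h.holeFree hzS
    grind
  all_goals simp [hz]

theorem ori_qrt (h : CrowdedFan x₀ C a u w r q p t s) : 0 < ori q r t := by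
  obtain ⟨htS, htp⟩ := h.mem_t
  have hput := h.ori_put
  have hwpt := h.ori_wpt
  have hupw := h.ori_upw
  have hutw := h.ori_utw
  have hptr := h.ori_pyr htS htp
  have hurq := h.ori_urq
  have hwrq := h.ori_wrq
  have htC := (mem_sector.1 htS).1
  have hrC := h.second.right_mem
  have hqC := h.third.right_mem
  have hqt := h.first.ori_pos_of_beyond h.holeFree htS h.beyond_q
  by_contra
  have hrqt : 0 < ori r q t := by grind [h.holeFree]
  have hrqp : 0 < ori r q p := mem_of_ori_nonneg (convex_ori_pos r q) (u := u) (v := t) (w := w)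
    (by grind) hrqt (by grind) hutw (by grind) (by grind) (by grind)
  have hprt : 0 < ori p r t :=
    (h.dividedFourHole_of_ori_rqp hrqp).rotate.ori_pos h.holeFree htC hwpt hrqt
  grind

theorem ori_qry (h : CrowdedFan x₀ C a u w r q p t s) (hy : y ∈ sector C a u w) (hyp : y ≠ p)
    (hyt : y ≠ t) (htyr : 0 < ori t y r) : 0 < ori q r y := by
  obtain ⟨htS, htp⟩ := h.mem_t
  obtain ⟨hpuy, hwpy⟩ := h.first.ori_pos_of_isLeftmost h.holeFree h.isLeftmost_p hy hyp
  have hupw := h.ori_upw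
  have huyw := h.first.ori_pos_of_mem h.holeFree hy
  have hpyr := h.ori_pyr hy hyp
  have hptr := h.ori_pyr htS htp
  have hpyt := h.ori_pyt hy hyp hyt
  have hqrt := h.ori_qrt
  have hurq := h.ori_urq
  have hwrq := h.ori_wrq
  have hyC := (mem_sector.1 hy).1
  have hrC := h.second.right_mem
  have hqC := h.third.right_mem
  have hyq := h.first.ori_pos_of_beyond h.holeFree hy h.beyond_q
  by_contra
  have hrqy : 0 < ori r q y := by grind [h.holeFree]
  have hrqp : 0 < ori r q p := mem_of_ori_nonneg (convex_ori_pos r q) (u := u) (v := y) (w := w)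
    (by grind) hrqy (by grind) huyw (by grind) (by grind) (by grind)
  have : 0 ≤ ori r q t := mem_of_ori_nonneg (convex_ori_nonneg r q) hrqp.le hrqy.le (by simp) hpyr
    hpyt.le (by grind) (by grind)
  grind

theorem ori_qrs (h : CrowdedFan x₀ C a u w r q p t s) : 0 < ori q r s :=
  h.ori_qry h.mem_s.1 h.mem_s.2.1 h.mem_s.2.2 (h.ori_tse h.beyond_r)

theorem dividedFourHole_tewp_of_isMin (h : CrowdedFan x₀ C a u w r q p t s)
    (he : e ∈ sector C a w r) (huse : 0 < ori u s e)
    (hmin : ∀ z ∈ sector C a w r, 0 < ori u s z → ori w t e ≤ ori w t z) :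
    DividedFourHole x₀ C t e w p := by
  have heB := h.beyond_of_mem_second he
  have hpte := h.ori_pte heB huse
  have hwpt := h.ori_wpt
  have hwpe := h.first.ori_pos_of_beyond h.holeFree h.mem_p heB
  have hwte := h.first.ori_pos_of_beyond h.holeFree h.mem_t.1 heB
  obtain ⟨hpC, hup, -⟩ := mem_sector.1 h.mem_p
  obtain ⟨htC, hut, -⟩ := mem_sector.1 h.mem_t.1
  obtain ⟨heC, hue, -⟩ := id heB
  have hwC := h.first.right_mem
  have huw := h.first.ori_pos
  refine ⟨by simp [Set.insert_subset_iff, *], by grind, by grind, hwpt, hpte,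
    fun z hz hzK => ?_, ⟨w, by simp, h.first.right_lt⟩, ⟨p, by simp, h.first.lt_of_mem p h.mem_p⟩⟩
  have hraz : 0 < ori r a z := mem_of_mem_convexHull_quad (convex_ori_pos r a) hzK
    (by grind [h.ori_r_of_mem_first h.mem_t.1]) (by grind) (by grind [h.second.ori_pos])
    (by grind [h.ori_r_of_mem_first h.mem_p])
  have htez : 0 ≤ ori t e z := mem_of_mem_convexHull_quad (convex_ori_nonneg t e) hzK (by simp)
    (by simp) (by grind) (by grind)
  have hewz : 0 ≤ ori e w z := mem_of_mem_convexHull_quad (convex_ori_nonneg e w) hzK (by grind)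
    (by simp) (by simp) (by grind)
  obtain hzS | hzS | rfl | rfl := h.mem_sector_of_mem_convexHull_of_ori_r h.holeFree hz hzK
    (by simp only [Set.mem_insert_iff, Set.mem_singleton_iff]
        grind [h.ori_r_of_mem_first h.mem_p, h.ori_r_of_mem_first h.mem_t.1, h.second.ori_pos])
  · have hptz : 0 ≤ ori p t z := mem_of_mem_convexHull_quad (convex_ori_nonneg p t) hzK (by simp)
      hpte.le (by grind) (by simp)
    by_contra
    have := h.ori_pyt hzS (by grind) (by grind)
    grind
  · have husz : 0 < ori u s z := mem_of_mem_convexHull_quad (convex_ori_pos u s) hzK h.ori_ust huse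
      h.ori_usw (by grind [h.ori_pus])
    have htez_eq : ori t e z = 0 := by
      linarith [ori_split t e w z, ori_rotate w t e, hmin z hzS husz]
    have := h.holeFree.ori_ne_zero htC heC hz
    grind
  · simp
  · simp at hraz

theorem ori_of_isMin (h : CrowdedFan x₀ C a u w r q p t s) (he : e ∈ sector C a w r)
    (huse : 0 < ori u s e)
    (hmin : ∀ z ∈ sector C a w r, 0 < ori u s z → ori w t e ≤ ori w t z)
    (hy : Beyond C a u w y) (husy : 0 < ori u s y) (hye : y ≠ e) :
    0 < ori e t y ∧ 0 < ori w e y := by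
  have quad := h.dividedFourHole_tewp_of_isMin he huse hmin
  have hC := h.holeFree
  have heB := h.beyond_of_mem_second he
  have hyC := hy.mem
  have heC := heB.mem
  have htC := (mem_sector.1 h.mem_t.1).1
  have hwC := h.first.right_mem
  have hpty := h.ori_pte hy husy
  have hwpy := h.first.ori_pos_of_beyond hC h.mem_p hy
  have hwty := h.first.ori_pos_of_beyond hC h.mem_t.1 hy
  have hwte := h.first.ori_pos_of_beyond hC h.mem_t.1 heB
  have hte_of_hew (hewy : 0 < ori e w y) : 0 < ori t e y :=
    quad.rotate.rotate.ori_pos hC hyC hpty hewy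
  have hew_of_hte (htey : 0 < ori t e y) : 0 < ori e w y :=
    quad.rotate.rotate.rotate.ori_pos hC hyC htey hwpy
  have hout (htey : 0 < ori t e y) : False := by
    have := quad.mem_of_ori hyC htey.le (hew_of_hte htey).le hwpy.le hpty.le
    grind
  grind

theorem eq_of_mem_second_of_isMin (h : CrowdedFan x₀ C a u w r q p t s)
    (he : e ∈ sector C a w r) (huse : 0 < ori u s e)
    (hmin : ∀ z ∈ sector C a w r, 0 < ori u s z → ori w t e ≤ ori w t z)
    (hz : z ∈ sector C a w r) (husz : 0 < ori u s z) (hrez : 0 ≤ ori r e z) : z = e := by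
  have hC := h.holeFree
  have hcard : (sector C a w r).card ≤ 2 :=
    h.second.card_sector_le_two_of_beyond_of_clockwise hC h.second_beyond_q h.third.right_lt
      h.ori_wrq h.first.left_mem h.first.left_lt h.first.ori_pos h.ori_aur (by grind [h.ori_uwr])
  by_contra hze
  have hwez := (h.ori_of_isMin he huse hmin (h.beyond_of_mem_second hz) husz hze).2
  obtain ⟨v, hv⟩ := exists_isLeftmost ⟨e, he⟩
  obtain rfl | hve := eq_or_ne v e
  · have := (h.second.ori_pos_of_isLeftmost hC hv hz hze).1
    grind
  obtain rfl : v = z := by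
    by_contra hvz
    have : ({v, z, e} : Finset Pt).card ≤ 2 :=
      (Finset.card_le_card (by simp [Finset.insert_subset_iff, hv.mem, hz, he])).trans hcard
    rw [Finset.card_eq_three.2 ⟨v, z, e, hvz, hve, hze, rfl⟩] at this
    lia
  have := (h.second.ori_pos_of_isLeftmost hC hv he hve.symm).2
  grind

theorem ori_sre_of_isMin (h : CrowdedFan x₀ C a u w r q p t s) (he : e ∈ sector C a w r)
    (huse : 0 < ori u s e)
    (hmin : ∀ z ∈ sector C a w r, 0 < ori u s z → ori w t e ≤ ori w t z) : 0 < ori s r e := by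
  have hC := h.holeFree
  have hsS := h.mem_s.1
  have htS := h.mem_t.1
  have heB := h.beyond_of_mem_second he
  have husr := h.first.ori_pos_left_of_beyond hC hsS h.beyond_r h.ori_uwr
  have htse := h.ori_tse heB
  have htsr := h.ori_tse h.beyond_r
  have her : e ≠ r := by grind
  have hetr := (h.ori_of_isMin he huse hmin h.beyond_r husr her.symm).1
  by_contra
  have : x₀ < r.1 := mem_of_ori_nonneg (convex_lt_fst x₀) (h.second.lt_of_mem e he)
    (h.first.lt_of_mem t htS) (h.first.lt_of_mem s hsS) (by grind) hetr.le htsr.le (by grind)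
  exact this.not_gt h.second.right_lt

theorem dividedFourHole_rets_of_isMin (h : CrowdedFan x₀ C a u w r q p t s)
    (he : e ∈ sector C a w r) (huse : 0 < ori u s e)
    (hmin : ∀ z ∈ sector C a w r, 0 < ori u s z → ori w t e ≤ ori w t z) :
    DividedFourHole x₀ C r e t s := by
  have hC := h.holeFree
  have hsS := h.mem_s.1
  have htS := h.mem_t.1
  have heB := h.beyond_of_mem_second he
  obtain ⟨heC, hue, -⟩ := id heB
  have hrC := h.second.right_mem
  obtain ⟨hsC, hus, -⟩ := mem_sector.1 hsS
  obtain ⟨htC, hut, -⟩ := mem_sector.1 htS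
  have husr := h.first.ori_pos_left_of_beyond hC hsS h.beyond_r h.ori_uwr
  have hpte := h.ori_pte heB huse
  have hwte := h.first.ori_pos_of_beyond hC htS heB
  have htse := h.ori_tse heB
  have htsr := h.ori_tse h.beyond_r
  have hetr := (h.ori_of_isMin he huse hmin h.beyond_r husr (by grind)).1
  have hsre := h.ori_sre_of_isMin he huse hmin
  refine ⟨by simp [Set.insert_subset_iff, *], by grind, by grind, by grind, hsre,
    fun z hz hzK => ?_, ⟨r, by simp, h.second.right_lt⟩, ⟨s, by simp, h.first.lt_of_mem s hsS⟩⟩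
  have husz : 0 ≤ ori u s z := mem_of_mem_convexHull_quad (convex_ori_nonneg u s) hzK husr.le
    huse.le h.ori_ust.le (by simp)
  have hetz : 0 ≤ ori e t z := mem_of_mem_convexHull_quad (convex_ori_nonneg e t) hzK hetr.le
    (by simp) (by simp) (by grind)
  have hrez : 0 ≤ ori r e z := mem_of_mem_convexHull_quad (convex_ori_nonneg r e) hzK (by simp)
    (by simp) (by grind) (by grind)
  obtain hzS | hzS | rfl | rfl := h.mem_sector_of_mem_convexHull_of_ori_r hC hz hzK
    (by simp only [Set.mem_insert_iff, Set.mem_singleton_iff]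
        grind [h.ori_r_of_mem_first hsS, h.ori_r_of_mem_first htS, h.ori_aur])
  · by_contra
    have := h.ori_of_mem_of_ne hzS (by grind) (by grind) (by grind)
    grind
  · have hzB := h.beyond_of_mem_second hzS
    have husz_pos : 0 < ori u s z := by
      grind [h.first.left_mem, h.ori_usw, h.first.ori_pos_of_beyond hC hsS hzB]
    simp [h.eq_of_mem_second_of_isMin he huse hmin hzS husz_pos hrez]
  · grind
  · simp

theorem ori_sue_of_mem_second (h : CrowdedFan x₀ C a u w r q p t s) (he : e ∈ sector C a w r) :
    0 < ori s u e := by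
  have hC := h.holeFree
  have hsC := (mem_sector.1 h.mem_s.1).1
  have huC := h.first.left_mem
  have hws := h.first.ori_pos_of_beyond hC h.mem_s.1 (h.beyond_of_mem_second he)
  have hue := (h.beyond_of_mem_second he).left
  have heC := (mem_sector.1 he).1
  by_contra
  have huse : 0 < ori u s e := by grind [h.ori_usw]
  -- The offending point closest to the line `wt` spans a divided 4-hole with `r`, `t`, `s`, beyond
  -- which `q` would lie.
  obtain ⟨f, hf, hmin⟩ := Finset.exists_min_image {z ∈ sector C a w r | 0 < ori u s z} (ori w t)
    ⟨e, by simp [he, huse]⟩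
  simp only [Finset.mem_filter] at hf hmin
  obtain ⟨hfS, husf⟩ := hf
  have hsrq : 0 < ori s r q :=
    (h.dividedFourHole_rets_of_isMin hfS husf fun z hz hz' => hmin z ⟨hz, hz'⟩).rotate.ori_pos hC
      h.third.right_mem (h.ori_tse h.beyond_q)
      (h.second.ori_pos_of_beyond hC hfS h.second_beyond_q)
  grind [h.ori_qrs]

theorem dividedFourHole_trwp (h : CrowdedFan x₀ C a u w r q p t s) :
    DividedFourHole x₀ C t r w p := by
  have hC := h.holeFree
  obtain ⟨hpC, hup, hwp⟩ := mem_sector.1 h.mem_p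
  obtain ⟨htS, htp⟩ := h.mem_t
  obtain ⟨htC, hut, hwt⟩ := mem_sector.1 htS
  have hwpt := h.ori_wpt
  have hwpr := h.first.ori_pos_of_beyond hC h.mem_p h.beyond_r
  have hwtr := h.first.ori_pos_of_beyond hC htS h.beyond_r
  have hptr := h.ori_pyr htS htp
  have hwC := h.first.right_mem
  have hrC := h.second.right_mem
  refine ⟨by simp [Set.insert_subset_iff, *], by grind, by grind, hwpt, by grind,
    fun z hz hzK => ?_, ⟨w, by simp, h.first.right_lt⟩, ⟨t, by simp, h.first.lt_of_mem t htS⟩⟩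
  have husz : 0 < ori u s z := mem_of_mem_convexHull_quad (convex_ori_pos u s) hzK h.ori_ust
    (h.first.ori_pos_left_of_beyond hC h.mem_s.1 h.beyond_r h.ori_uwr) h.ori_usw
    (by grind [h.ori_pus])
  have hzt : z.1 ≤ t.1 := mem_of_mem_convexHull_quad (convex_fst_le t.1) hzK (le_refl t.1)
    (h.second.right_lt.trans (h.first.lt_of_mem t htS)).le
    (h.first.right_lt.trans (h.first.lt_of_mem t htS)).le (h.isLeftmost_p.le t htS)
  have hcone : ∀ k ∈ ({t, r, w, p} : Set Pt), 0 < ori a u k ∧ 0 ≤ ori r a k := by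
    simp only [Set.mem_insert_iff, Set.mem_singleton_iff]
    grind [ori_self_outer, h.ori_r_of_mem_first htS, h.ori_r_of_mem_first h.mem_p, h.ori_aur,
      h.first.ori_pos, h.second.ori_pos]
  obtain hzS | hzS | rfl | rfl := h.mem_sector_of_mem_convexHull_of_ori_r hC hz hzK hcone
  · have := h.eq_of_fst_le_s hzS (hzt.trans h.fst_t_lt.le)
    have : z ≠ s := by rintro rfl; exact hzt.not_gt h.fst_t_lt
    grind
  · grind [h.ori_sue_of_mem_second hzS]
  all_goals simp

theorem ori_sue_of_mem_third (h : CrowdedFan x₀ C a u w r q p t s) (he : e ∈ sector C a r q) :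
    0 < ori s u e := by
  have hC := h.holeFree
  have heB := h.beyond_of_mem_third he
  have hsC := (mem_sector.1 h.mem_s.1).1
  have huC := h.first.left_mem
  have heC := heB.mem
  have hwse := h.first.ori_pos_of_beyond hC h.mem_s.1 heB
  have hue := heB.left
  by_contra
  have huse : 0 < ori u s e := by grind [h.ori_usw]
  have hrwe : 0 < ori e r w := h.third.ori_pos_of_clockwise_beyond hC he h.first.right_mem
    h.second.ori_pos h.ori_awq
  have hrte : 0 < ori r t e := ori_pos_of_turn (a := a) (b := w) (by grind [h.second.ori_pos])
    (by grind [h.ori_r_of_mem_first h.mem_t.1])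
    (by grind [h.first.ori_pos_of_beyond hC h.mem_t.1 h.beyond_r]) (by grind) (by grind)
  have : 0 < ori t r e :=
    h.dividedFourHole_trwp.rotate.rotate.ori_pos hC heC (h.ori_pte heB huse) (by grind)
  grind

theorem dividedFourHole_qrts (h : CrowdedFan x₀ C a u w r q p t s) :
    DividedFourHole x₀ C q r t s := by
  have hC := h.holeFree
  have hsS := h.mem_s.1
  have htS := h.mem_t.1
  obtain ⟨hsC, hus, -⟩ := mem_sector.1 hsS
  obtain ⟨htC, hut, -⟩ := mem_sector.1 htS
  have hrC := h.second.right_mem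
  have hqC := h.third.right_mem
  have htsr := h.ori_tse h.beyond_r
  have htsq := h.ori_tse h.beyond_q
  have hqrt := h.ori_qrt
  have hqrs := h.ori_qrs
  refine ⟨by simp [Set.insert_subset_iff, *], hqrt, by grind, by grind, by grind,
    fun z hz hzK => ?_, ⟨q, by simp, h.third.right_lt⟩, ⟨s, by simp, h.first.lt_of_mem s hsS⟩⟩
  have husz : 0 ≤ ori u s z := mem_of_mem_convexHull_quad (convex_ori_nonneg u s) hzK
    (h.first.ori_pos_left_of_beyond hC hsS h.beyond_q h.ori_uwq).le
    (h.first.ori_pos_left_of_beyond hC hsS h.beyond_r h.ori_uwr).le h.ori_ust.le (by simp)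
  have hrtz : 0 ≤ ori r t z := mem_of_mem_convexHull_quad (convex_ori_nonneg r t) hzK
    (by grind) (by simp) (by simp) (by grind)
  have hcone : ∀ k ∈ ({q, r, t, s} : Set Pt), 0 < ori a u k ∧ 0 ≤ ori q a k := by
    simp only [Set.mem_insert_iff, Set.mem_singleton_iff]
    grind [ori_self_outer, h.ori_q_of_mem_first htS, h.ori_q_of_mem_first hsS, h.ori_aur, h.ori_auq,
      h.third.ori_pos]
  obtain hzS | hzS | hzS | rfl | rfl | rfl := h.mem_sector_of_mem_convexHull hC hz hzK hcone
  · by_contra hne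
    simp only [Set.mem_insert_iff, Set.mem_singleton_iff, not_or] at hne
    have := h.ori_of_mem_of_ne hzS (by grind [h.ori_pyr htS h.mem_t.2]) hne.2.2.1 hne.2.2.2
    grind
  · grind [h.ori_sue_of_mem_second hzS]
  · grind [h.ori_sue_of_mem_third hzS]
  · grind [h.first.ori_pos_of_beyond hC htS h.beyond_r]
  all_goals simp

theorem eq_of_mem (h : CrowdedFan x₀ C a u w r q p t s) (hy : y ∈ sector C a u w) :
    y = p ∨ y = t ∨ y = s := by
  have hC := h.holeFree
  have hyC := (mem_sector.1 hy).1
  have hsS := h.mem_s.1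
  have htS := h.mem_t.1
  have htsr := h.ori_tse h.beyond_r
  by_contra! hne
  obtain ⟨hyp, hyt, hys⟩ := hne
  obtain ⟨hsuy, htsy⟩ := h.ori_of_mem_of_ne hy hyp hyt hys
  have hpty := h.ori_pyt hy hyp hyt
  have htyr : 0 < ori t y r := ori_pos_of_turn (a := p) (b := s) (by grind [h.ori_pst]) (by grind)
    (by grind) (by grind) (by grind [h.ori_pyr htS h.mem_t.2])
  have hsqy : 0 < ori s q y :=
    h.dividedFourHole_qrts.rotate.ori_pos hC hyC htsy (h.ori_qry hy hyp hyt htyr)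
  have husq := h.first.ori_pos_left_of_beyond hC hsS h.beyond_q h.ori_uwq
  have : 0 < ori s y q := ori_pos_of_spanning (a := t) (b := u) (by grind [h.ori_ust]) hsuy
    (by grind)
    (by grind [h.ori_tse h.beyond_q]) (by grind)
  grind

end CrowdedFan

theorem EmptyFan.card_sector_le_three (h : EmptyFan x₀ C a u w r q) (hC : DividedHoleFree x₀ C) :
    (sector C a u w).card ≤ 3 := by
  by_contra! hcard
  set S := sector C a u w
  obtain ⟨p, hp⟩ := exists_isLeftmost (T := S) (Finset.card_pos.1 (by lia))
  have hcard_p := Finset.card_erase_of_mem hp.mem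
  obtain ⟨t, ht⟩ := exists_isLeftmost (T := S.erase p) (Finset.card_pos.1 (by lia))
  have hcard_t := Finset.card_erase_of_mem ht.mem
  obtain ⟨s, hs⟩ := exists_isLeftmost (T := (S.erase p).erase t) (Finset.card_pos.1 (by lia))
  have hsub : S ⊆ {p, t, s} := fun y hy => by
    simpa using CrowdedFan.eq_of_mem ⟨h, hC, hp, ht, hs⟩ hy
  exact hcard.not_ge ((Finset.card_le_card hsub).trans Finset.card_le_three)

end

/-! ### Empty sectors over a convex left part -/

theorem ConvexPos.ori_pos {S : Set Pt} (hS : ConvexPos S) {a b c d : Pt} (ha : a ∈ S) (hb : b ∈ S)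
    (hc : c ∈ S) (hd : d ∈ S) (habc : 0 < ori a b c) (hacd : 0 < ori a c d)
    (habd : 0 < ori a b d) : 0 < ori b c d := by
  by_contra
  have hmem {x : Pt} (hx : x ∈ S) (hxc : x ≠ c) : x ∈ convexHull ℝ (S \ {c}) :=
    subset_convexHull ℝ _ ⟨hx, hxc⟩
  exact hS c hc <| mem_of_ori_nonneg (convex_convexHull ℝ _) (hmem ha (by grind))
    (hmem hb (by grind)) (hmem hd (by grind)) habd habc.le (by grind) (by grind)

theorem exists_forall_ori_nonneg {R : Finset Pt} (hR : R.Nonempty) {a u : Pt}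
    (hu : ∀ z ∈ R, 0 < ori a u z) : ∃ r ∈ R, ∀ z ∈ R, 0 ≤ ori a r z := by
  obtain ⟨w, hw⟩ := hR
  obtain ⟨r, hr, hmin⟩ := R.exists_min_image (fun z => ori a w z / ori a u z) ⟨w, hw⟩
  refine ⟨r, hr, fun z hz => ?_⟩
  have hle : ori a w r * ori a u z ≤ ori a w z * ori a u r :=
    (div_le_div_iff₀ (hu r hr) (hu z hz)).1 (hmin z hz)
  exact nonneg_of_mul_nonneg_right (by linarith [ori_mul_ori a u w r z]) (hu w hw)

section

variable {x₀ : ℝ} {A B C : Finset Pt} {a u w z : Pt}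

namespace EmptySector

theorem beyond_or_of_convexPos (h : EmptySector x₀ C a u w) (hC : DividedHoleFree x₀ C)
    {S : Set Pt} (hS : ConvexPos S) (ha : a ∈ S) (hu : u ∈ S) (hw : w ∈ S) (hz : z ∈ S)
    (hzC : z ∈ C) (hzx : z.1 < x₀) (hza : z ≠ a) (hzu : z ≠ u) (hzw : z ≠ w) :
    Beyond C a u w z ∨ 0 < ori a z u ∧ 0 < ori a z w := by
  obtain ⟨haC, huC, hwC, -, -, -, hauw, hsector⟩ := id h
  by_contra! hnot
  have hzsector : z ∉ sector C a u w := fun hmem => (hsector z hmem).not_gt hzx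
  have hawz : 0 < ori a w z := by grind
  have hazu : 0 < ori a z u := by
    by_contra
    exact hnot.1 ⟨hzC, by grind, hawz⟩
  have hmem {x : Pt} (hx : x ∈ S) (hxa : x ≠ a) : x ∈ convexHull ℝ (S \ {a}) :=
    subset_convexHull ℝ _ ⟨hx, hxa⟩
  exact hS a ha <| mem_of_ori_nonneg (convex_convexHull ℝ _) (hmem hu (by grind))
    (hmem hw (by grind)) (hmem hz hza) (by grind [ori_split u w z a]) (by grind) (by grind)
    (by grind)

theorem of_forall_ori_nonneg (hA : ∀ p ∈ A, p.1 < x₀) (hB : ∀ p ∈ B, x₀ < p.1) (ha : a ∈ A)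
    (hu : u ∈ A) (hw : w ∈ A) (hauw : 0 < ori a u w)
    (hempty : ∀ z ∈ A, 0 < ori a u z → 0 ≤ ori a w z) : EmptySector x₀ (A ∪ B) a u w where
  apex_mem := Finset.mem_union_left B ha
  left_mem := Finset.mem_union_left B hu
  right_mem := Finset.mem_union_left B hw
  apex_lt := hA a ha
  left_lt := hA u hu
  right_lt := hA w hw
  ori_pos := hauw
  lt_of_mem z hz := by
    obtain ⟨hzC, huz, hwz⟩ := mem_sector.1 hz
    obtain hzA | hzB := Finset.mem_union.1 hzC
    · grind
    · exact hB z hzB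

theorem mem_of_union (h : EmptySector x₀ (A ∪ B) a u w) (hB : ∀ p ∈ B, x₀ < p.1) :
    a ∈ A ∧ u ∈ A ∧ w ∈ A := by
  have hmem {z : Pt} (hz : z ∈ A ∪ B) (hzx : z.1 < x₀) : z ∈ A :=
    (Finset.mem_union.1 hz).resolve_right fun hzB => (hB z hzB).not_gt hzx
  exact ⟨hmem h.apex_mem h.apex_lt, hmem h.left_mem h.left_lt, hmem h.right_mem h.right_lt⟩

theorem card_sector_le_three_of_forall_beyond (h : EmptySector x₀ (A ∪ B) a u w)
    (hC : DividedHoleFree x₀ (A ∪ B)) (hA : ∀ p ∈ A, p.1 < x₀) (hB : ∀ p ∈ B, x₀ < p.1)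
    (hconv : ConvexPos (A : Set Pt)) (hcard : 5 ≤ A.card)
    (hbeyond : ∀ z ∈ A, z ≠ a → z ≠ u → z ≠ w → Beyond (A ∪ B) a u w z) :
    (sector (A ∪ B) a u w).card ≤ 3 := by
  have hauw := h.ori_pos
  obtain ⟨ha, hu, hw⟩ := h.mem_of_union hB
  set R := A \ {a, u, w} with hR
  have hRcard : 2 ≤ R.card := by
    have := Finset.le_card_sdiff {a, u, w} A
    have : ({a, u, w} : Finset Pt).card ≤ 3 := Finset.card_le_three
    lia
  have hbeyondR (z : Pt) (hz : z ∈ R) : Beyond (A ∪ B) a u w z := by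
    simp only [hR, Finset.mem_sdiff, Finset.mem_insert, Finset.mem_singleton, not_or] at hz
    exact hbeyond z hz.1 hz.2.1 hz.2.2.1 hz.2.2.2
  obtain ⟨r, hr, hrmin⟩ := exists_forall_ori_nonneg (Finset.card_pos.1 (by lia))
    fun z hz => (hbeyondR z hz).right
  obtain ⟨q, hq, hqmin⟩ := exists_forall_ori_nonneg (R := R.erase r)
    (Finset.card_pos.1 (by rw [Finset.card_erase_of_mem hr]; lia))
    fun z hz => (hbeyondR z (Finset.mem_of_mem_erase hz)).right
  obtain ⟨hqr, hqR⟩ := Finset.mem_erase.1 hq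
  have hrA : r ∈ A := (Finset.mem_sdiff.1 hr).1
  have hqA : q ∈ A := (Finset.mem_sdiff.1 hqR).1
  obtain ⟨hrC, haur, hawr⟩ := hbeyondR r hr
  obtain ⟨hqC, hauq, hawq⟩ := hbeyondR q hqR
  have harq : 0 < ori a r q := by grind [hrmin q hqR, h.apex_mem]
  have hsecond : EmptySector x₀ (A ∪ B) a w r :=
    of_forall_ori_nonneg hA hB ha hw hrA hawr fun z hz hawz => hrmin z (by grind)
  have hthird : EmptySector x₀ (A ∪ B) a r q :=
    of_forall_ori_nonneg hA hB ha hrA hqA harq fun z hz harz => hqmin z (by grind)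
  exact EmptyFan.card_sector_le_three ⟨h, hsecond, hthird, hauq, hawq,
    hconv.ori_pos ha hu hw hrA hauw hawr haur, hconv.ori_pos ha hu hw hqA hauw hawq hauq,
    hconv.ori_pos ha hu hrA hqA haur harq hauq, hconv.ori_pos ha hw hrA hqA hawr harq hawq⟩ hC

theorem card_sector_le_three_of_forall_clockwise (h : EmptySector x₀ (A ∪ B) a u w)
    (hC : DividedHoleFree x₀ (A ∪ B)) (hA : ∀ p ∈ A, p.1 < x₀) (hB : ∀ p ∈ B, x₀ < p.1)
    (hconv : ConvexPos (A : Set Pt)) (hcard : 5 ≤ A.card)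
    (hclockwise : ∀ z ∈ A, z ≠ a → z ≠ u → z ≠ w → 0 < ori a z u ∧ 0 < ori a z w) :
    (sector (A ∪ B) a u w).card ≤ 3 := by
  have hreflect := h.image_reflect
  have hCreflect := hC.image_reflect
  rw [← Finset.card_image_of_injective _ reflect.injective, ← sector_image_reflect]
  rw [Finset.image_union] at hreflect hCreflect ⊢
  refine hreflect.card_sector_le_three_of_forall_beyond hCreflect (Finset.forall_mem_image.2 hA)
    (Finset.forall_mem_image.2 hB) (by simpa using hconv.image reflect)
    (by rwa [Finset.card_image_of_injective _ reflect.injective]) ?_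
  rw [← Finset.image_union]
  simp only [Finset.forall_mem_image, reflect.injective.ne_iff]
  intro z hz hza hzw hzu
  obtain ⟨hzu, hzw⟩ := hclockwise z hz hza hzu hzw
  exact .image_reflect (Finset.mem_union_left B hz) hzu hzw

theorem card_sector_le_three (h : EmptySector x₀ (A ∪ B) a u w)
    (hC : DividedHoleFree x₀ (A ∪ B)) (hA : ∀ p ∈ A, p.1 < x₀) (hB : ∀ p ∈ B, x₀ < p.1)
    (hconv : ConvexPos (A : Set Pt)) (hcard : 5 ≤ A.card) :
    (sector (A ∪ B) a u w).card ≤ 3 := by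
  have hauw := h.ori_pos
  obtain ⟨ha, hu, hw⟩ := h.mem_of_union hB
  have hside (z : Pt) (hz : z ∈ A) (hza : z ≠ a) (hzu : z ≠ u) (hzw : z ≠ w) :
      Beyond (A ∪ B) a u w z ∨ 0 < ori a z u ∧ 0 < ori a z w :=
    h.beyond_or_of_convexPos hC hconv ha hu hw hz (Finset.mem_union_left B hz) (hA z hz) hza hzu hzw
  by_cases hbeyond : ∀ z ∈ A, z ≠ a → z ≠ u → z ≠ w → Beyond (A ∪ B) a u w z
  · exact h.card_sector_le_three_of_forall_beyond hC hA hB hconv hcard hbeyond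
  by_cases hclockwise : ∀ z ∈ A, z ≠ a → z ≠ u → z ≠ w → 0 < ori a z u ∧ 0 < ori a z w
  · exact h.card_sector_le_three_of_forall_clockwise hC hA hB hconv hcard hclockwise
  push Not at hbeyond hclockwise
  obtain ⟨z, hz, hza, hzu, hzw, hzbeyond⟩ := hbeyond
  obtain ⟨hazu, hazw⟩ := (hside z hz hza hzu hzw).resolve_left hzbeyond
  obtain ⟨r, hr, hra, hru, hrw, hrclockwise⟩ := hclockwise
  have hrbeyond := (hside r hr hra hru hrw).resolve_right (by grind)
  have huwr := hconv.ori_pos ha hu hw hr hauw hrbeyond.right hrbeyond.left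
  have hzuw := hconv.ori_pos ha hz hu hw hazu hauw hazw
  exact (h.card_sector_le_two_of_beyond_of_clockwise hC hrbeyond (hA r hr) huwr
    (Finset.mem_union_left B hz) (hA z hz) hazu hazw (by grind)).trans (by simp)

end EmptySector

end

/-! ### Extreme points -/

theorem ori_eq_zero_of_ori_eq_zero {x y w z : Pt} (hxy : x ≠ y) (hw : ori x y w = 0)
    (hz : ori x y z = 0) : ori x w z = 0 := by
  by_contra hwz
  simp only [ori_def] at *
  refine hxy (Prod.ext (mul_left_cancel₀ hwz ?_) (mul_left_cancel₀ hwz ?_))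
  · linear_combination (z.1 - x.1) * hw - (w.1 - x.1) * hz
  · linear_combination (z.2 - x.2) * hw - (w.2 - x.2) * hz

theorem notMem_interior_convexHull_of_ori_nonneg {S : Set Pt} {p q : Pt} (hpq : p ≠ q)
    (hS : ∀ z ∈ S, 0 ≤ ori p q z) : p ∉ interior (convexHull ℝ S) := by
  intro hp
  let n : Pt := (q.2 - p.2, p.1 - q.1)
  have hcont : Filter.Tendsto (fun t : ℝ => p + t • n) (nhdsWithin 0 (Set.Ioi 0)) (nhds p) := by
    refine (Continuous.tendsto' ?_ 0 p (by simp)).mono_left nhdsWithin_le_nhds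
    fun_prop
  obtain ⟨t, htS, ht : 0 < t⟩ := ((hcont.eventually (mem_interior_iff_mem_nhds.1 hp)).and
    self_mem_nhdsWithin).exists
  have hnonneg : 0 ≤ ori p q (p + t • n) := convexHull_min hS (convex_ori_nonneg p q) htS
  have hori : ori p q (p + t • n) = -t * ((q.1 - p.1) ^ 2 + (q.2 - p.2) ^ 2) := by
    simp [ori_def, n]; ring
  have hsq : (q.1 - p.1) ^ 2 + (q.2 - p.2) ^ 2 ≤ 0 := by nlinarith
  exact hpq (Prod.ext (by nlinarith) (by nlinarith))

theorem onHullBoundary_of_forall_ori_le {P : Finset Pt} {x y z : Pt} (hxy : x ≠ y) (hz : z ∈ P)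
    (hmax : ∀ w ∈ P, ori x y w ≤ ori x y z) : OnHullBoundary P z := by
  refine ⟨subset_closure (subset_convexHull ℝ _ hz),
    notMem_interior_convexHull_of_ori_nonneg (q := z + (x - y)) (by simpa [sub_eq_zero] using hxy)
      fun w hw => ?_⟩
  have : ori z (z + (x - y)) w = ori x y z - ori x y w := by simp [ori_def]; ring
  linarith [hmax w hw]

theorem IsLeftmost.onHullBoundary {P : Finset Pt} {x : Pt} (hx : IsLeftmost P x) :
    OnHullBoundary P x :=
  onHullBoundary_of_forall_ori_le (x := 0) (y := (0, 1)) (by simp [Prod.ext_iff]) hx.mem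
    fun z hz => by simpa [ori_def] using hx.le z hz

theorem OnHullBoundary.exists_forall_ori_nonneg {P : Finset Pt} {x : Pt} (hx : OnHullBoundary P x)
    (hinterior : (interior (convexHull ℝ (P : Set Pt))).Nonempty) :
    ∃ y, x ≠ y ∧ ∀ z ∈ P, 0 ≤ ori x y z := by
  have hconv := convex_convexHull ℝ (P : Set Pt)
  obtain ⟨f, hf⟩ := geometric_hahn_banach_open_point hconv.interior isOpen_interior hx.2
  have hle : ∀ z ∈ P, f z ≤ f x := fun z hz => by
    refine closure_minimal (fun y hy => (hf y hy).le) (isClosed_le f.continuous continuous_const) ?_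
    rw [hconv.closure_interior_eq_closure_of_nonempty_interior hinterior]
    exact subset_closure (subset_convexHull ℝ _ hz)
  have hcoord (z : Pt) : f z = z.1 * f (1, 0) + z.2 * f (0, 1) := by
    rw [← smul_eq_mul, ← smul_eq_mul, ← map_smul, ← map_smul, ← map_add]
    simp
  refine ⟨x + (-f (0, 1), f (1, 0)), fun hxy => ?_, fun z hz => ?_⟩
  · obtain ⟨z, hz⟩ := hinterior
    have : f (0, 1) = 0 ∧ f (1, 0) = 0 := by simpa using hxy
    have hlt := hf z hz
    simp [hcoord z, hcoord x, this] at hlt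
  · have : ori x (x + (-f (0, 1), f (1, 0))) z = f x - f z := by
      rw [hcoord x, hcoord z]; simp [ori_def]; ring
    linarith [hle z hz]

theorem notMem_convexHull_insert_of_ori_pos {S : Set Pt} {x y z : Pt} (hS : ∀ w ∈ S, 0 < ori x y w)
    (hz : 0 ≤ ori x y z) (hxz : x ≠ z) : x ∉ convexHull ℝ (insert z S) := by
  obtain rfl | hne := S.eq_empty_or_nonempty
  · simpa using hxz
  rw [convexHull_insert hne, convexJoin_singleton_left, Set.mem_iUnion₂]
  rintro ⟨w, hw, s, t, hs, ht, hst, hx⟩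
  have hw : 0 < ori x y w := convexHull_min hS (convex_ori_pos x y) hw
  have hori := ori_affine x y (x := z) (y := w) hst
  rw [hx, ori_self_outer] at hori
  obtain rfl | ht := ht.eq_or_lt
  · obtain rfl : s = 1 := by linarith
    exact hxz (by simpa using hx.symm)
  · nlinarith [mul_pos ht hw, mul_nonneg hs hz]

theorem OnHullBoundary.notMem_convexHull {P : Finset Pt} {x : Pt} (hx : OnHullBoundary P x)
    (hxP : x ∈ P) (hgen : GenPos (P : Set Pt))
    (hinterior : (interior (convexHull ℝ (P : Set Pt))).Nonempty) :
    x ∉ convexHull ℝ ((P : Set Pt) \ {x}) := by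
  obtain ⟨y, hxy, hy⟩ := hx.exists_forall_ori_nonneg hinterior
  intro hmem
  by_cases hpos : ∀ z ∈ (P : Set Pt) \ {x}, 0 < ori x y z
  · have : 0 < ori x y x := convexHull_min hpos (convex_ori_pos x y) hmem
    simp at this
  push Not at hpos
  obtain ⟨z, ⟨hz, hzx⟩, hxyz⟩ := hpos
  have hxyz : ori x y z = 0 := hxyz.antisymm (hy z hz)
  refine notMem_convexHull_insert_of_ori_pos (S := (P : Set Pt) \ {x, z}) (fun w hw => ?_) hxyz.ge
    (Ne.symm hzx) (convexHull_mono (fun w hw => ?_) hmem)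
  · simp only [Set.mem_sdiff, Set.mem_insert_iff, Set.mem_singleton_iff, not_or] at hw
    refine (hy w hw.1).lt_of_ne' fun hxyw => ?_
    exact hgen.ori_ne_zero hxP hw.1 hz (Ne.symm hw.2.1) (Ne.symm hzx) hw.2.2
      (ori_eq_zero_of_ori_eq_zero hxy hxyw hxyz)
  · by_cases hwz : w = z
    · simp [hwz]
    · exact Or.inr ⟨hw.1, by simp_all⟩

theorem forall_ori_nonneg_or_nonpos {P : Finset Pt} {x y : Pt} (hx : x ∈ P) (hxy : x.1 < y.1)
    (hyP : y ∉ convexHull ℝ ((P : Set Pt) \ {y}))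
    (hright : ∀ z ∈ P, OnHullBoundary P z → ori x y z ≠ 0 → y.1 < z.1) :
    (∀ z ∈ P, 0 ≤ ori x y z) ∨ ∀ z ∈ P, ori x y z ≤ 0 := by
  have hne : x ≠ y := fun h => hxy.ne (congrArg Prod.fst h)
  by_contra! hsides
  obtain ⟨⟨v, hv, hxyv⟩, u, hu, hxyu⟩ := hsides
  obtain ⟨p, hp, hpmax⟩ := P.exists_max_image (ori x y) ⟨x, hx⟩
  obtain ⟨q, hq, hqmin⟩ := P.exists_min_image (ori x y) ⟨x, hx⟩
  have hxyp : 0 < ori x y p := hxyu.trans_le (hpmax u hu)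
  have hxyq : ori x y q < 0 := (hqmin v hv).trans_lt hxyv
  have hyp : y.1 < p.1 :=
    hright p hp (onHullBoundary_of_forall_ori_le hne hp hpmax) hxyp.ne'
  have hyq : y.1 < q.1 := by
    refine hright q hq (onHullBoundary_of_forall_ori_le hne.symm hq fun w hw => ?_) hxyq.ne
    linarith [hqmin w hw, ori_swap_left x y w, ori_swap_left x y q]
  have hqpy : 0 ≤ ori q p y := by
    refine nonneg_of_mul_nonneg_right (a := y.1 - x.1) ?_ (sub_pos.2 hxy)
    have : (y.1 - x.1) * ori q p y =
        (q.1 - y.1) * ori x y p + (p.1 - y.1) * -ori x y q := by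
      simp only [ori_def]; ring
    nlinarith
  have hmem {z : Pt} (hz : z ∈ P) (hzy : z ≠ y) : z ∈ convexHull ℝ ((P : Set Pt) \ {y}) :=
    subset_convexHull ℝ _ ⟨hz, hzy⟩
  exact hyP <| mem_of_ori_nonneg (convex_convexHull ℝ _) (hmem hx hne) (hmem hq (by grind))
    (hmem hp (by grind)) (by grind [ori_split x q p y]) (by grind) hqpy (by grind)

/-! ### Critical sets -/

theorem IsKHole.of_erase {k : ℕ} {P H : Finset Pt} {x : Pt} (h : IsKHole k (P.erase x) H)
    (hx : x ∉ convexHull ℝ ((P : Set Pt) \ {x})) : IsKHole k P H := by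
  obtain ⟨hHP, hcard, hconv, hempty⟩ := h
  refine ⟨hHP.trans (P.erase_subset x), hcard, hconv, fun p hp hpH hphull => ?_⟩
  obtain rfl | hpx := eq_or_ne p x
  · exact hx (convexHull_mono (by exact_mod_cast hHP) hphull)
  · exact hempty p (Finset.mem_erase.2 ⟨hpx, hp⟩) hpH hphull

theorem DividedHoleFree.erase {x₀ : ℝ} {C : Finset Pt} {x : Pt} (h : DividedHoleFree x₀ C)
    (hx : x ∉ convexHull ℝ ((C : Set Pt) \ {x})) : DividedHoleFree x₀ (C.erase x) where
  genPos p hp q hq r hr := h.genPos p (Finset.mem_of_mem_erase hp) q (Finset.mem_of_mem_erase hq) r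
    (Finset.mem_of_mem_erase hr)
  injOn_fst := h.injOn_fst.mono (C.erase_subset x)
  not_divided H hH := h.not_divided H (hH.of_erase hx)

/-- An `ℓ`-critical set `A ∪ B` without `ℓ`-divided 5-holes, where `ℓ` is the vertical line at `x₀`
and `A` lies to its left. -/
structure HoleFreeCritical (x₀ : ℝ) (A B : Finset Pt) : Prop where
  lt_of_mem_left : ∀ p ∈ A, p.1 < x₀
  lt_of_mem_right : ∀ p ∈ B, x₀ < p.1
  genPos : GenPos (↑(A ∪ B) : Set Pt)
  injOn_fst : Set.InjOn Prod.fst (↑(A ∪ B) : Set Pt)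
  critical : LCritical A B
  not_divided : ¬ ∃ H : Finset Pt, DividedFiveHole A B H

section

variable {x₀ : ℝ} {A B : Finset Pt} {x b z : Pt} {k : ℕ}

namespace HoleFreeCritical

theorem notMem_right (h : HoleFreeCritical x₀ A B) (hx : x ∈ A) : x ∉ B := fun hxB =>
  (h.lt_of_mem_left x hx).not_gt (h.lt_of_mem_right x hxB)

theorem dividedHoleFree (h : HoleFreeCritical x₀ A B) : DividedHoleFree x₀ (A ∪ B) := by
  refine ⟨h.genPos, h.injOn_fst, fun H hH ⟨p, hp, hpx⟩ ⟨q, hq, hqx⟩ => h.not_divided ⟨H, hH, ?_⟩⟩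
  have hA := h.lt_of_mem_left
  have hB := h.lt_of_mem_right
  refine ⟨⟨p, hp, ?_⟩, ⟨q, hq, ?_⟩⟩
  · exact (Finset.mem_union.1 (hH.1 hp)).resolve_right fun hpB => (hB p hpB).not_gt hpx
  · exact (Finset.mem_union.1 (hH.1 hq)).resolve_left fun hqA => (hA q hqA).not_gt hqx

theorem dividedHoleFree_erase (h : HoleFreeCritical x₀ A B) (hx : x ∈ A)
    (hxhull : x ∉ convexHull ℝ ((A ∪ B : Finset Pt) \ {x} : Set Pt)) :
    DividedHoleFree x₀ (A.erase x ∪ B) := by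
  have := h.dividedHoleFree.erase hxhull
  rwa [Finset.erase_union_distrib, Finset.erase_eq_of_notMem (h.notMem_right hx)] at this

theorem convexPos_erase (h : HoleFreeCritical x₀ A B) (hx : x ∈ A)
    (hxb : OnHullBoundary (A ∪ B) x) : ConvexPos (A.erase x : Set Pt) := by
  obtain ⟨-, hBconv, hcrit⟩ := h.critical
  have := hcrit x (Finset.mem_union_left B hx) hxb
  rw [Finset.erase_eq_of_notMem (h.notMem_right hx)] at this
  exact this.resolve_right hBconv

end HoleFreeCritical

theorem mem_wedge_iff {a p q : Pt} (haqp : 0 < ori a q p) :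
    z ∈ Wedge a p q ↔ 0 ≤ ori a q z ∧ 0 ≤ ori p a z := by
  have hapq : ori a p q ≤ 0 := by grind
  rw [ori] at hapq
  rw [Wedge, if_pos hapq]
  change ori a p z ≤ 0 ∧ 0 ≤ ori a q z ↔ _
  grind

theorem mem_wedge_iff_of_reflex {a p q : Pt} (hapq : 0 < ori a p q) :
    z ∈ Wedge a p q ↔ ori a p z ≤ 0 ∨ 0 ≤ ori a q z := by
  rw [ori] at hapq
  rw [Wedge, if_neg hapq.not_ge]
  rfl

namespace StarSetup

theorem lbl_mem_left (S : StarSetup x₀ A) (k : ℕ) : S.lbl k ∈ A :=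
  Finset.mem_of_mem_erase (S.lbl_mem k)

theorem lbl_ne_aStar (S : StarSetup x₀ A) (k : ℕ) : S.lbl k ≠ S.aStar :=
  Finset.ne_of_mem_erase (S.lbl_mem k)

theorem lbl_sub_one_ne (S : StarSetup x₀ A) (hcard : 3 ≤ A.card)
    (hk : k ∈ Finset.Icc 1 (A.card - 1)) : S.lbl (k - 1) ≠ S.lbl k := by
  intro heq
  obtain ⟨j, -, hunique⟩ := S.lbl_bij _ (S.lbl_mem k)
  have hkj : k = j := hunique k ⟨hk, rfl⟩
  rw [Finset.mem_Icc] at hk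
  obtain rfl | hk1 := eq_or_ne k 1
  · have hperiod : S.lbl (A.card - 1) = S.lbl 1 := by
      simpa using (S.lbl_periodic 0).trans heq
    have := hunique (A.card - 1) ⟨Finset.mem_Icc.2 ⟨by lia, le_rfl⟩, hperiod⟩
    lia
  · have := hunique (k - 1) ⟨Finset.mem_Icc.2 ⟨by lia, by lia⟩, heq⟩
    lia

theorem ori_lbl_pos (S : StarSetup x₀ A) (hgen : GenPos (A : Set Pt)) (hcard : 3 ≤ A.card)
    (hk : k ∈ Finset.Icc 1 (A.card - 1)) : 0 < ori S.aStar (S.lbl k) (S.lbl (k - 1)) := by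
  set a := S.aStar
  set p := S.lbl (k - 1)
  set q := S.lbl k
  have hne : ori a p q ≠ 0 := hgen.ori_ne_zero S.aStar_mem (S.lbl_mem_left _) (S.lbl_mem_left _)
    (S.lbl_ne_aStar _).symm (S.lbl_ne_aStar _).symm (S.lbl_sub_one_ne hcard hk)
  by_contra
  have hapq : 0 < ori a p q := by grind
  refine notMem_interior_convexHull_of_ori_nonneg (S.lbl_ne_aStar (k - 1)).symm (fun z hz => ?_)
    S.aStar_interior
  by_contra! hlt
  obtain rfl | rfl | rfl : z = a ∨ z = p ∨ z = q := by
    simpa using S.consec k hk ⟨hz, (mem_wedge_iff_of_reflex hapq).2 (.inl hlt.le)⟩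
  all_goals grind [ori_self_outer, ori_self_right]

theorem emptySector (S : StarSetup x₀ A) (hA : ∀ p ∈ A, p.1 < x₀) (hB : ∀ p ∈ B, x₀ < p.1)
    (hpos : 0 < ori S.aStar (S.lbl k) (S.lbl (k - 1))) (hk : k ∈ Finset.Icc 1 (A.card - 1))
    (hxa : x ≠ S.aStar) (hxp : x ≠ S.lbl (k - 1)) (hxq : x ≠ S.lbl k) :
    EmptySector x₀ (A.erase x ∪ B) S.aStar (S.lbl k) (S.lbl (k - 1)) := by
  refine .of_forall_ori_nonneg (fun p hp => hA p (Finset.mem_of_mem_erase hp)) hB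
    (Finset.mem_erase.2 ⟨hxa.symm, S.aStar_mem⟩)
    (Finset.mem_erase.2 ⟨hxq.symm, S.lbl_mem_left k⟩)
    (Finset.mem_erase.2 ⟨hxp.symm, S.lbl_mem_left (k - 1)⟩) hpos fun z hz hqz => ?_
  by_contra! hlt
  obtain rfl | rfl | rfl : z = S.aStar ∨ z = S.lbl (k - 1) ∨ z = S.lbl k := by
    simpa using S.consec k hk
      ⟨Finset.mem_of_mem_erase hz, (mem_wedge_iff hpos).2 ⟨hqz.le, by grind⟩⟩
  all_goals simp at hqz hlt

theorem aStar_fst_le_lbl_fst (S : StarSetup x₀ A) (hA : ∀ p ∈ A, p.1 < x₀)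
    (hgen : GenPos (A : Set Pt)) (hcard : 3 ≤ A.card) (hk : 1 ≤ k) (hkt : k + 1 ≤ S.t) :
    S.aStar.1 ≤ (S.lbl k).1 := by
  have ht := S.t_le
  have hk₁ : k ∈ Finset.Icc 1 (A.card - 1) := Finset.mem_Icc.2 ⟨hk, by lia⟩
  have hk₂ : k + 1 ∈ Finset.Icc 1 (A.card - 1) := Finset.mem_Icc.2 ⟨by lia, by lia⟩
  obtain ⟨y, hyW, hyx : y.1 = x₀⟩ := (S.inter_iff k hk₁).2 (by lia)
  obtain ⟨z, hzW, hzx : z.1 = x₀⟩ := (S.inter_iff (k + 1) hk₂).2 hkt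
  have hzy : z.2 ≤ y.2 := S.ordered k (Finset.mem_Icc.2 ⟨hk, by lia⟩) (k + 1)
    (Finset.mem_Icc.2 ⟨by lia, hkt⟩) (by lia) y ⟨hyW, hyx⟩ z ⟨hzW, hzx⟩
  have hpos := S.ori_lbl_pos hgen hcard hk₁
  obtain ⟨hqy, hpy⟩ := (mem_wedge_iff hpos).1 hyW
  have hqz := ((mem_wedge_iff (S.ori_lbl_pos hgen hcard hk₂)).1 hzW).2
  simp only [Nat.add_sub_cancel] at hqz
  by_contra! hlt
  have hay : S.aStar.1 < y.1 := hyx ▸ hA _ S.aStar_mem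
  have hqy_eq : ori S.aStar (S.lbl k) y = 0 := by
    refine hqy.antisymm' ?_
    have : ori S.aStar (S.lbl k) y + ori (S.lbl k) S.aStar z =
        ((S.lbl k).1 - S.aStar.1) * (y.2 - z.2) := by
      simp only [ori_def, hyx, hzx]; ring
    nlinarith
  have : (S.aStar.1 - (S.lbl k).1) * ori (S.lbl (k - 1)) S.aStar y +
      (y.1 - S.aStar.1) * ori S.aStar (S.lbl k) (S.lbl (k - 1)) = 0 := by
    rw [← mul_zero ((S.lbl (k - 1)).1 - S.aStar.1), ← hqy_eq]
    simp only [ori_def]; ring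
  have := mul_nonneg (sub_nonneg.2 hlt.le) hpy
  have := mul_pos (sub_pos.2 hay) hpos
  linarith

theorem ne_aStar_of_onHullBoundary (S : StarSetup x₀ A) (hxb : OnHullBoundary (A ∪ B) x) :
    x ≠ S.aStar := by
  rintro rfl
  exact hxb.2 (interior_mono (convexHull_mono (by simp)) S.aStar_interior)

end StarSetup

namespace HoleFreeCritical

theorem genPos_left (h : HoleFreeCritical x₀ A B) : GenPos (A : Set Pt) := fun p hp q hq r hr =>
  h.genPos p (by simp_all) q (by simp_all) r (by simp_all)

theorem notMem_convexHull (h : HoleFreeCritical x₀ A B) (S : StarSetup x₀ A) (hx : x ∈ A)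
    (hxb : OnHullBoundary (A ∪ B) x) : x ∉ convexHull ℝ ((A ∪ B : Finset Pt) \ {x} : Set Pt) :=
  hxb.notMem_convexHull (Finset.mem_union_left B hx) h.genPos
    ⟨S.aStar, interior_mono (convexHull_mono (by simp)) S.aStar_interior⟩

theorem mem_sector_of_mem_W (h : HoleFreeCritical x₀ A B) (S : StarSetup x₀ A)
    (hpos : 0 < ori S.aStar (S.lbl k) (S.lbl (k - 1))) (hb : b ∈ B) (hbW : b ∈ S.W k) :
    b ∈ sector (A.erase x ∪ B) S.aStar (S.lbl k) (S.lbl (k - 1)) := by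
  have hori {p q : Pt} (hp : p ∈ A) (hq : q ∈ A) (hpq : p ≠ q) : ori p q b ≠ 0 :=
    h.genPos.ori_ne_zero (Finset.mem_union_left B hp) (Finset.mem_union_left B hq)
      (Finset.mem_union_right A hb) hpq (fun hpb => h.notMem_right hp (hpb ▸ hb))
      (fun hqb => h.notMem_right hq (hqb ▸ hb))
  obtain ⟨hqb, hpb⟩ := (mem_wedge_iff hpos).1 hbW
  exact mem_sector.2 ⟨Finset.mem_union_right _ hb,
    hqb.lt_of_ne' (hori S.aStar_mem (S.lbl_mem_left k) (S.lbl_ne_aStar k).symm),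
    hpb.lt_of_ne' (hori (S.lbl_mem_left _) S.aStar_mem (S.lbl_ne_aStar _))⟩

theorem w_le_three (h : HoleFreeCritical x₀ A B) (S : StarSetup x₀ A) (hcard : 6 ≤ A.card)
    (hk : k ∈ Finset.Icc 1 (A.card - 1)) (hx : x ∈ A) (hxb : OnHullBoundary (A ∪ B) x)
    (hxp : x ≠ S.lbl (k - 1)) (hxq : x ≠ S.lbl k) : S.w B k ≤ 3 := by
  have hA := h.lt_of_mem_left
  have hB := h.lt_of_mem_right
  have hpos := S.ori_lbl_pos h.genPos_left (by lia) hk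
  have hsector := S.emptySector hA hB hpos hk (S.ne_aStar_of_onHullBoundary hxb) hxp hxq
  have hcard_sector := hsector.card_sector_le_three
    (h.dividedHoleFree_erase hx (h.notMem_convexHull S hx hxb))
    (fun p hp => hA p (Finset.mem_of_mem_erase hp)) hB (h.convexPos_erase hx hxb)
    (by rw [Finset.card_erase_of_mem hx]; lia)
  refine le_trans ?_ hcard_sector
  rw [StarSetup.w, ← Set.ncard_coe_finset]
  exact Set.ncard_le_ncard (fun b ⟨hb, hbW⟩ => h.mem_sector_of_mem_W S hpos hb hbW)
    (Finset.finite_toSet _)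

theorem w_le_three_of_lt_of_lt (h : HoleFreeCritical x₀ A B) (S : StarSetup x₀ A)
    (hcard : 6 ≤ A.card) (hk : 1 < k) (hkt : k < S.t) : S.w B k ≤ 3 := by
  have ht := S.t_le
  obtain ⟨x, hx⟩ := exists_isLeftmost ⟨S.aStar, S.aStar_mem⟩
  have hxb : OnHullBoundary (A ∪ B) x := IsLeftmost.onHullBoundary
    ⟨Finset.mem_union_left B hx.mem, fun z hz => (Finset.mem_union.1 hz).elim (hx.le z) fun hzB =>
      ((h.lt_of_mem_left x hx.mem).trans (h.lt_of_mem_right z hzB)).le⟩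
  have hne_lbl {j : ℕ} (hj : 1 ≤ j) (hjt : j + 1 ≤ S.t) : x ≠ S.lbl j := by
    rintro rfl
    have hle := S.aStar_fst_le_lbl_fst h.lt_of_mem_left h.genPos_left (by lia) hj hjt
    exact S.lbl_ne_aStar j <| h.injOn_fst (Finset.mem_union_left B hx.mem)
      (Finset.mem_union_left B S.aStar_mem) ((hx.le _ S.aStar_mem).antisymm hle)
  exact h.w_le_three S hcard (Finset.mem_Icc.2 ⟨by lia, by lia⟩) hx.mem hxb
    (hne_lbl (by lia) (by lia)) (hne_lbl (by lia) (by lia))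

theorem ori_lbl_neg_of_mem_W (h : HoleFreeCritical x₀ A B) (S : StarSetup x₀ A)
    (hpos : 0 < ori S.aStar (S.lbl k) (S.lbl (k - 1))) (hb : b ∈ B) (hbW : b ∈ S.W k) :
    ori (S.lbl k) (S.lbl (k - 1)) b < 0 := by
  have hA := h.lt_of_mem_left
  obtain ⟨hqb, hpb⟩ := (mem_wedge_iff hpos).1 hbW
  by_contra! hqpb
  exact (h.lt_of_mem_right b hb).not_gt <| fst_lt_of_ori_nonneg (hA _ S.aStar_mem)
    (hA _ (S.lbl_mem_left _)) (hA _ (S.lbl_mem_left _)) hpos hqb hqpb hpb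

theorem ori_nonneg_or_nonpos (h : HoleFreeCritical x₀ A B) (S : StarSetup x₀ A) {x y : Pt}
    (hxy : x.1 < y.1) (hpair : {p | p ∈ A ∧ OnHullBoundary (A ∪ B) p} = {x, y}) :
    (∀ z ∈ A ∪ B, 0 ≤ ori x y z) ∨ ∀ z ∈ A ∪ B, ori x y z ≤ 0 := by
  obtain ⟨hx, -⟩ : x ∈ A ∧ OnHullBoundary (A ∪ B) x := hpair.ge (by simp)
  obtain ⟨hy, hyb⟩ : y ∈ A ∧ OnHullBoundary (A ∪ B) y := hpair.ge (by simp)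
  refine forall_ori_nonneg_or_nonpos (Finset.mem_union_left B hx) hxy
    (h.notMem_convexHull S hy hyb) fun z hz hzb hxyz => ?_
  obtain hzA | hzB := Finset.mem_union.1 hz
  · obtain rfl | rfl : z = x ∨ z = y := hpair.le ⟨hzA, hzb⟩
    all_goals simp at hxyz
  · exact (h.lt_of_mem_left y hy).trans (h.lt_of_mem_right z hzB)

theorem w_le_three_of_boundary_pair (h : HoleFreeCritical x₀ A B) (S : StarSetup x₀ A)
    (hcard : 6 ≤ A.card) (hk : k ∈ Finset.Icc 1 (A.card - 1)) {x y : Pt} (hxy : x.1 < y.1)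
    (hpair : {p | p ∈ A ∧ OnHullBoundary (A ∪ B) p} = {x, y}) : S.w B k ≤ 3 := by
  obtain ⟨hx, hxb⟩ : x ∈ A ∧ OnHullBoundary (A ∪ B) x := hpair.ge (by simp)
  obtain ⟨hy, hyb⟩ : y ∈ A ∧ OnHullBoundary (A ∪ B) y := hpair.ge (by simp)
  by_cases hx_spare : x ≠ S.lbl (k - 1) ∧ x ≠ S.lbl k
  · exact h.w_le_three S hcard hk hx hxb hx_spare.1 hx_spare.2
  by_cases hy_spare : y ≠ S.lbl (k - 1) ∧ y ≠ S.lbl k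
  · exact h.w_le_three S hcard hk hy hyb hy_spare.1 hy_spare.2
  have hpos := S.ori_lbl_pos h.genPos_left (by lia) hk
  have hempty : (B : Set Pt) ∩ S.W k = ∅ := by
    refine Set.eq_empty_of_forall_notMem fun b ⟨hb, hbW⟩ => ?_
    have hneg := h.ori_lbl_neg_of_mem_W S hpos hb hbW
    have ha : S.aStar ∈ A ∪ B := Finset.mem_union_left B S.aStar_mem
    have hbC : b ∈ A ∪ B := Finset.mem_union_right A hb
    obtain hside | hside := h.ori_nonneg_or_nonpos S hxy hpair
    all_goals
      have := hside _ ha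
      have := hside b hbC
      grind
  simp [StarSetup.w, hempty]

end HoleFreeCritical
end

/-- **Lemma 14.** Let `C = A ∪ B` be an `ℓ`-critical set with no `ℓ`-divided 5-hole
and `|A| ≥ 6`. Then `w_i ≤ 3` for every `1 < i < t`. Moreover, if exactly two points
of `A` lie on the boundary of the convex hull of `C`, then also `w_1 ≤ 3` and
`w_t ≤ 3`. -/
theorem wedges_at_most_three
    (x0 : ℝ) (A B : Finset Pt)
    (hA : ∀ p ∈ A, p.1 < x0) (hB : ∀ p ∈ B, x0 < p.1)
    (hBne : B.Nonempty)
    (hgen : GenPos (↑(A ∪ B) : Set Pt))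
    (hx : Set.InjOn Prod.fst (↑(A ∪ B) : Set Pt))
    (hAnc : ¬ ConvexPos (↑A : Set Pt))
    (S : StarSetup x0 A)
    (hcrit : LCritical A B)
    (hnh : ¬ ∃ H : Finset Pt, DividedFiveHole A B H)
    (hAcard : 6 ≤ A.card) :
    (∀ i : ℕ, 1 < i → i < S.t → S.w B i ≤ 3) ∧
      (Set.ncard {p : Pt | p ∈ A ∧ OnHullBoundary (A ∪ B) p} = 2 →
        S.w B 1 ≤ 3 ∧ S.w B S.t ≤ 3) := by
  have h : HoleFreeCritical x0 A B := ⟨hA, hB, hgen, hx, hcrit, hnh⟩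
  refine ⟨fun i hi hit => h.w_le_three_of_lt_of_lt S hAcard hi hit, fun hpair => ?_⟩
  obtain ⟨x, y, hxy, hset⟩ := Set.ncard_eq_two.1 hpair
  have hle {k : ℕ} (hk : k ∈ Finset.Icc 1 (A.card - 1)) : S.w B k ≤ 3 := by
    have hxC : x ∈ A ∪ B := Finset.mem_union_left B (hset.ge (Set.mem_insert x {y})).1
    have hyC : y ∈ A ∪ B := Finset.mem_union_left B (hset.ge (Set.mem_insert_of_mem x rfl)).1
    obtain hlt | hlt := (hx.ne hxC hyC hxy).lt_or_gt
    · exact h.w_le_three_of_boundary_pair S hAcard hk hlt hset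
    · exact h.w_le_three_of_boundary_pair S hAcard hk hlt (hset.trans (Set.pair_comm x y))
  exact ⟨hle (Finset.mem_Icc.2 ⟨le_rfl, by lia⟩), hle (Finset.mem_Icc.2 ⟨S.t_pos, S.t_le⟩)⟩

end
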